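/- arXiv:math/9207203 — 11 statements merged into one kernel-verified Lean document; each statement's English description precedes it below -/
import Mathlib

section
/- Let (P,<) be a directed partially ordered set with no maximum element. The following statements are equivalent: (1) there is an (add(P,<), cof(P,<)) pseudo Lusin set for (P,<); (2) (P,<) has the irredundancy property; (3) there is a cofinal (add(P,<), cof(P,<)) pseudo Lusin set for (P,<). -/
/-!
A cofinal set in an order without maximum is unbounded, so `addP P ≤ cofP P`; and a set of size
less than `addP P` inside a cofinal `Q` is bounded by an element of `Q`, so `addP P ≤ burstP Q`.
Hence irredundancy says that some cofinal `Q` has all its bounded subsets of size `< addP P`.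

* Such a `Q` is the union, over a cofinal set `D` of size `cofP P`, of the sets
  `{q ∈ Q | q ≤ d}`, each of size `< addP P ≤ cofP P`; thus `|Q| = cofP P` and `Q` is a cofinal
  pseudo Lusin set. Conversely a cofinal pseudo Lusin set has bursting number `≤ addP P`.
* A pseudo Lusin set `L` becomes cofinal on replacing each `l ∈ L` by an upper bound of `l` and
  `e l`, where `e` is a bijection from `L` onto a cofinal set of size `cofP P`.

The hypotheses of the theorem allow `P` to be empty; there all the invariants vanish.
-/

open Cardinal

universe u v

/-- The additivity of a partially ordered set: the least cardinality of a subset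
with no upper bound. -/
noncomputable def addP (P : Type u) [PartialOrder P] : Cardinal.{u} :=
  sInf { c : Cardinal.{u} | ∃ s : Set P, #↥s = c ∧ ¬ ∃ b : P, ∀ x ∈ s, x ≤ b }

/-- The cofinality of a partially ordered set: the least cardinality of a cofinal subset. -/
noncomputable def cofP (P : Type u) [PartialOrder P] : Cardinal.{u} :=
  sInf { c : Cardinal.{u} | ∃ s : Set P, #↥s = c ∧ ∀ x : P, ∃ y ∈ s, x ≤ y }

/-- The bursting number: the smallest cardinal exceeding the cardinality of every
bounded subset. -/
noncomputable def burstP (P : Type u) [PartialOrder P] : Cardinal.{u} :=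
  sInf { c : Cardinal.{u} | ∀ s : Set P, (∃ b : P, ∀ x ∈ s, x ≤ b) → #↥s < c }

/-- The principal bursting number: the minimum of the bursting numbers of the
cofinal subsets. -/
noncomputable def buP (P : Type u) [PartialOrder P] : Cardinal.{u} :=
  sInf { c : Cardinal.{u} | ∃ Q : Set P, (∀ x : P, ∃ y ∈ Q, x ≤ y) ∧ burstP ↥Q = c }

/-- `L` is a `(κ,lam)` pseudo Lusin set: `|L| = lam` and for each `x ∈ P` the set
of elements of `L` below `x` has cardinality `< κ`. -/
def IsPseudoLusin (P : Type u) [PartialOrder P] (κ lam : Cardinal.{u}) (L : Set P) : Prop :=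
  #↥L = lam ∧ ∀ x : P, #↥{y | y ∈ L ∧ y ≤ x} < κ

section PseudoLusin

variable {P : Type u} [PartialOrder P]

lemma addP_le_mk {s : Set P} (h : ¬ ∃ b : P, ∀ x ∈ s, x ≤ b) : addP P ≤ #↥s :=
  csInf_le' ⟨s, rfl, h⟩

lemma exists_bound_of_mk_lt {s : Set P} (h : #↥s < addP P) : ∃ b : P, ∀ x ∈ s, x ≤ b := by
  by_contra hb
  exact absurd (addP_le_mk hb) h.not_ge

lemma cofP_le_mk {s : Set P} (h : ∀ x : P, ∃ y ∈ s, x ≤ y) : cofP P ≤ #↥s :=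
  csInf_le' ⟨s, rfl, h⟩

lemma exists_cofinal_mk_eq (P : Type u) [PartialOrder P] :
    ∃ D : Set P, #↥D = cofP P ∧ ∀ x : P, ∃ y ∈ D, x ≤ y :=
  csInf_mem (s := { c : Cardinal.{u} | ∃ s : Set P, #↥s = c ∧ ∀ x : P, ∃ y ∈ s, x ≤ y })
    ⟨_, Set.univ, rfl, fun x => ⟨x, trivial, le_rfl⟩⟩

/-- The infimum defining `burstP` is attained. -/
lemma mk_lt_burstP {s : Set P} (h : ∃ b : P, ∀ x ∈ s, x ≤ b) : #↥s < burstP P :=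
  csInf_mem (s := { c : Cardinal.{u} | ∀ s : Set P, (∃ b : P, ∀ x ∈ s, x ≤ b) → #↥s < c })
    ⟨Order.succ #P, fun s _ => Order.lt_succ_of_le (mk_set_le s)⟩ s h

lemma not_bounded_of_cofinal (hnomax : ∀ a : P, ∃ b : P, a < b) {Q : Set P}
    (hQ : ∀ x : P, ∃ y ∈ Q, x ≤ y) : ¬ ∃ b : P, ∀ x ∈ Q, x ≤ b := by
  rintro ⟨b, hb⟩
  obtain ⟨c, hc⟩ := hnomax b
  obtain ⟨y, hy, hcy⟩ := hQ c
  exact absurd (hcy.trans (hb y hy)) hc.not_ge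

lemma addP_le_burstP (hnomax : ∀ a : P, ∃ b : P, a < b) {Q : Set P}
    (hQ : ∀ x : P, ∃ y ∈ Q, x ≤ y) : addP P ≤ burstP ↥Q := by
  by_contra! hlt
  -- `Q` has a subset of size exactly `burstP Q`, and it is bounded in `Q`.
  obtain ⟨s, hs⟩ := le_mk_iff_exists_set.1
    (hlt.le.trans (addP_le_mk (not_bounded_of_cofinal hnomax hQ)))
  obtain ⟨b, hb⟩ := exists_bound_of_mk_lt (s := Subtype.val '' s) (mk_image_le.trans_lt (hs ▸ hlt))
  obtain ⟨y, hy, hby⟩ := hQ b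
  have hlt' : #↥s < burstP ↥Q :=
    mk_lt_burstP ⟨⟨y, hy⟩, fun x hx => (hb x ⟨x, hx, rfl⟩).trans hby⟩
  exact absurd hs hlt'.ne

/-- For cofinal `Q`, a bound in `P` can be replaced by a bound in `Q`. -/
lemma mk_below_lt_burstP {Q : Set P} (hQ : ∀ x : P, ∃ y ∈ Q, x ≤ y) (x : P) :
    #↥{y | y ∈ Q ∧ y ≤ x} < burstP ↥Q := by
  obtain ⟨q, hq, hxq⟩ := hQ x
  have h : #↥{y : ↥Q | (y : P) ≤ x} < burstP ↥Q := mk_lt_burstP ⟨⟨q, hq⟩, fun y hy => hy.trans hxq⟩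
  refine lt_of_le_of_lt ?_ h
  have heq : {y | y ∈ Q ∧ y ≤ x} = Subtype.val '' {y : ↥Q | (y : P) ≤ x} := by
    ext y
    simp [and_comm]
  rw [heq]
  exact mk_image_le

lemma aleph0_le_cofP [Nonempty P] (hdir : ∀ a b : P, ∃ c : P, a ≤ c ∧ b ≤ c)
    (hnomax : ∀ a : P, ∃ b : P, a < b) : ℵ₀ ≤ cofP P := by
  obtain ⟨D, hD, hcof⟩ := exists_cofinal_mk_eq P
  rw [← hD]
  by_contra! hlt
  have hfin : D.Finite := lt_aleph0_iff_set_finite.1 hlt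
  have : IsDirectedOrder P := ⟨hdir⟩
  exact not_bounded_of_cofinal hnomax hcof hfin.bddAbove

lemma exists_cofinal_pseudoLusin {κ : Cardinal.{u}}
    (hdir : ∀ a b : P, ∃ c : P, a ≤ c ∧ b ≤ c) {L : Set P} (hL : IsPseudoLusin P κ (cofP P) L) :
    ∃ L' : Set P, IsPseudoLusin P κ (cofP P) L' ∧ ∀ x : P, ∃ y ∈ L', x ≤ y := by
  obtain ⟨D, hD, hcof⟩ := exists_cofinal_mk_eq P
  obtain ⟨e⟩ := Cardinal.eq.1 (hL.1.trans hD.symm)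
  choose f hf hfe using fun l : ↥L => hdir l (e l)
  have hcof' : ∀ x : P, ∃ y ∈ Set.range f, x ≤ y := by
    intro x
    obtain ⟨y, hy, hxy⟩ := hcof x
    refine ⟨_, ⟨e.symm ⟨y, hy⟩, rfl⟩, hxy.trans ?_⟩
    simpa using hfe (e.symm ⟨y, hy⟩)
  refine ⟨Set.range f, ⟨le_antisymm (mk_range_le.trans hL.1.le) (cofP_le_mk hcof'), ?_⟩, hcof'⟩
  intro x
  refine lt_of_le_of_lt ?_ (hL.2 x)
  -- Every element of the new set below `x` is `f l` for some `l ∈ L` below `x`.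
  have hex : ∀ y : ↥{y | y ∈ Set.range f ∧ y ≤ x}, ∃ l : ↥L, f l = y := fun y => y.2.1
  choose g hg using hex
  refine mk_le_of_injective
    (f := fun y => ⟨g y, (g y).2, (hf (g y)).trans ((hg y).trans_le y.2.2)⟩) ?_
  intro y z hyz
  have hgyz : g y = g z := Subtype.ext (Subtype.mk.inj hyz)
  exact Subtype.ext ((hg y).symm.trans ((congrArg f hgyz).trans (hg z)))

lemma buP_eq_addP_of_cofinal (hnomax : ∀ a : P, ∃ b : P, a < b) {L : Set P}
    (hL : ∀ x : P, #↥{y | y ∈ L ∧ y ≤ x} < addP P) (hcof : ∀ x : P, ∃ y ∈ L, x ≤ y) :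
    buP P = addP P := by
  apply le_antisymm
  · refine (csInf_le' ⟨L, hcof, rfl⟩ : buP P ≤ burstP ↥L).trans (csInf_le' ?_)
    rintro s ⟨b, hb⟩
    refine lt_of_le_of_lt ?_ (hL b)
    rw [← mk_image_eq (s := s) Subtype.val_injective]
    refine mk_le_mk_of_subset ?_
    rintro _ ⟨y, hy, rfl⟩
    exact ⟨y.2, hb y hy⟩
  · refine le_csInf ⟨_, L, hcof, rfl⟩ ?_
    rintro _ ⟨Q, hQ, rfl⟩
    exact addP_le_burstP hnomax hQ

lemma exists_cofinal_pseudoLusin_of_buP_eq (hdir : ∀ a b : P, ∃ c : P, a ≤ c ∧ b ≤ c)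
    (hnomax : ∀ a : P, ∃ b : P, a < b) (h : buP P = addP P) :
    ∃ L : Set P, IsPseudoLusin P (addP P) (cofP P) L ∧ ∀ x : P, ∃ y ∈ L, x ≤ y := by
  obtain ⟨D, hD, hcofD⟩ := exists_cofinal_mk_eq P
  cases isEmpty_or_nonempty P with
  | inl hP =>
    exact ⟨D, ⟨hD, fun x => hP.elim x⟩, hcofD⟩
  | inr hP =>
    obtain ⟨Q, hQ, hburst⟩ : ∃ Q : Set P, (∀ x : P, ∃ y ∈ Q, x ≤ y) ∧ burstP ↥Q = buP P :=
      csInf_mem (s := { c : Cardinal.{u} |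
        ∃ Q : Set P, (∀ x : P, ∃ y ∈ Q, x ≤ y) ∧ burstP ↥Q = c }) ⟨_, D, hcofD, rfl⟩
    have hlt : ∀ x : P, #↥{y | y ∈ Q ∧ y ≤ x} < addP P := fun x =>
      h ▸ hburst ▸ mk_below_lt_burstP hQ x
    refine ⟨Q, ⟨le_antisymm ?_ (cofP_le_mk hQ), hlt⟩, hQ⟩
    have hadd : addP P ≤ cofP P := hD ▸ addP_le_mk (not_bounded_of_cofinal hnomax hcofD)
    have hsub : Q ⊆ ⋃ d : ↥D, {y | y ∈ Q ∧ y ≤ (d : P)} := by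
      intro q hq
      obtain ⟨d, hd, hqd⟩ := hcofD q
      exact Set.mem_iUnion.2 ⟨⟨d, hd⟩, hq, hqd⟩
    calc #↥Q ≤ #↥(⋃ d : ↥D, {y | y ∈ Q ∧ y ≤ (d : P)}) := mk_le_mk_of_subset hsub
      _ ≤ sum fun d : ↥D => #↥{y | y ∈ Q ∧ y ≤ (d : P)} := mk_iUnion_le_sum_mk
      _ ≤ sum fun _ : ↥D => cofP P := sum_le_sum _ _ fun d => (hlt d).le.trans hadd
      _ = cofP P * cofP P := by rw [sum_const', hD]
      _ = cofP P := mul_eq_self (aleph0_le_cofP hdir hnomax)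

end PseudoLusin

/-- Proposition 2.3: for a directed partially ordered set with no maximum element, the
existence of an `(add, cof)` pseudo Lusin set, the irredundancy property, and the
existence of a cofinal `(add, cof)` pseudo Lusin set are equivalent. -/
theorem stmt0 (P : Type u) [PartialOrder P]
    (hdir : ∀ a b : P, ∃ c : P, a ≤ c ∧ b ≤ c)
    (hnomax : ∀ a : P, ∃ b : P, a < b) :
    List.TFAE
      [ ∃ L : Set P, IsPseudoLusin P (addP P) (cofP P) L,
        buP P = addP P,
        ∃ L : Set P, IsPseudoLusin P (addP P) (cofP P) L ∧ ∀ x : P, ∃ y ∈ L, x ≤ y ] := by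
  tfae_have 1 → 3 := fun ⟨_, hL⟩ => exists_cofinal_pseudoLusin hdir hL
  tfae_have 3 → 2 := fun ⟨_, hL, hcof⟩ => buP_eq_addP_of_cofinal hnomax hL.2 hcof
  tfae_have 2 → 3 := exists_cofinal_pseudoLusin_of_buP_eq hdir hnomax
  tfae_have 3 → 1 := fun ⟨L, hL, _⟩ => ⟨L, hL⟩
  tfae_finish
end

section
/- Let 𝒜 be a locally small family of countable sets such that (𝒜,⊊) is well-founded. Then 𝒜 has a coherent decomposition: one can assign to each A ∈ 𝒜 a sequence (Aⁿ : n < ω) of finite subsets of A with Aⁿ ⊆ A^{n+1} for all n and A = ⋃ₙ Aⁿ, such that whenever A, B ∈ 𝒜 and A ⊊ B there is an m with Aⁿ ⊆ Bⁿ for all n ≥ m. -/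
/-!
Fix for every `B ∈ 𝒜` an injection `e B` of `B` into `ℕ` and an injection `f B` into `ℕ` of the
countable set of members of `𝒜` below `B`. By recursion along `⊂`, put
`Bⁿ = {x ∈ B | e B x ≤ n} ∪ ⋃ {Aⁿ | A ∈ 𝒜, A ⊂ B, f B A ≤ n}`.
Only finitely many `A` occur in the union, so `Bⁿ` is finite by well-founded induction, and for
`A ⊂ B` the number `m = f B A` witnesses coherence. The recursion is encoded as the inductive
predicate `CoherentPiece`, so well-foundedness is used only for finiteness.
-/

open Cardinal

universe u v

/-- `CoherentPiece 𝒜 e f n B x` says that `x` belongs to the `n`-th piece `Bⁿ` of `B`: either `x` is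
among the elements of `B` numbered at most `n` by `e B`, or it is in the `n`-th piece of some
`A ⊂ B` in `𝒜` numbered at most `n` by `f B`. -/
inductive CoherentPiece {S : Type u} (𝒜 : Set (Set S)) (e : Set S → S → ℕ)
    (f : Set S → Set S → ℕ) (n : ℕ) : Set S → S → Prop
  | base {B : Set S} {x : S} (hx : x ∈ B) (hn : e B x ≤ n) : CoherentPiece 𝒜 e f n B x
  | step {A B : Set S} {x : S} (hA : A ∈ 𝒜) (hAB : A ⊂ B) (hn : f B A ≤ n)
      (h : CoherentPiece 𝒜 e f n A x) : CoherentPiece 𝒜 e f n B x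

/-- Theorem 3.2: a locally small, well-founded (under `⊊`) family `𝒜` of countable sets
has a coherent decomposition into finite sets. -/
theorem stmt2 {S : Type u} (𝒜 : Set (Set S))
    (hct : ∀ A ∈ 𝒜, A.Countable)
    (hls : ∀ X ∈ 𝒜, {Y | Y ∈ 𝒜 ∧ Y ⊆ X}.Countable)
    (hwf : 𝒜.WellFoundedOn (· ⊂ ·)) :
    ∃ D : Set S → ℕ → Set S,
      (∀ A ∈ 𝒜, ∀ n : ℕ, (D A n).Finite ∧ D A n ⊆ A) ∧
      (∀ A ∈ 𝒜, ∀ n : ℕ, D A n ⊆ D A (n + 1)) ∧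
      (∀ A ∈ 𝒜, A = ⋃ n, D A n) ∧
      (∀ A ∈ 𝒜, ∀ B ∈ 𝒜, A ⊂ B → ∃ m : ℕ, ∀ n ≥ m, D A n ⊆ D B n) := by
  have he : ∀ B : Set S, ∃ g : S → ℕ, B ∈ 𝒜 → Set.InjOn g B := fun B => by
    by_cases hB : B ∈ 𝒜
    · obtain ⟨g, hg⟩ := Set.countable_iff_exists_injOn.1 (hct B hB)
      exact ⟨g, fun _ => hg⟩
    · exact ⟨fun _ => 0, fun h => absurd h hB⟩
  have hf : ∀ B : Set S, ∃ g : Set S → ℕ, B ∈ 𝒜 → Set.InjOn g {Y | Y ∈ 𝒜 ∧ Y ⊆ B} := fun B => by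
    by_cases hB : B ∈ 𝒜
    · obtain ⟨g, hg⟩ := Set.countable_iff_exists_injOn.1 (hls B hB)
      exact ⟨g, fun _ => hg⟩
    · exact ⟨fun _ => 0, fun h => absurd h hB⟩
  choose e he using he
  choose f hf using hf
  have hsub : ∀ n B x, CoherentPiece 𝒜 e f n B x → x ∈ B := by
    intro n B x h
    induction h with
    | base hx _ => exact hx
    | step _ hAB _ _ ih => exact hAB.subset ih
  have hmono : ∀ n B x, CoherentPiece 𝒜 e f n B x → CoherentPiece 𝒜 e f (n + 1) B x := by
    intro n B x h
    induction h with
    | base hx hn => exact .base hx (by omega)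
    | step hA hAB hn _ ih => exact .step hA hAB (by omega) ih
  have hfin : ∀ n, ∀ B ∈ 𝒜, {x | CoherentPiece 𝒜 e f n B x}.Finite := by
    intro n B hB
    refine hwf.induction hB (P := fun B => {x | CoherentPiece 𝒜 e f n B x}.Finite) ?_
    clear! B
    intro B hB ih
    have h1 : {x | x ∈ B ∧ e B x ≤ n}.Finite :=
      Set.Finite.of_finite_image ((Set.finite_Iic n).subset (by rintro _ ⟨x, hx, rfl⟩; exact hx.2))
        ((he B hB).mono fun _ hx => hx.1)
    have h2 : {A | (A ∈ 𝒜 ∧ A ⊂ B) ∧ f B A ≤ n}.Finite :=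
      Set.Finite.of_finite_image ((Set.finite_Iic n).subset (by rintro _ ⟨x, hx, rfl⟩; exact hx.2))
        ((hf B hB).mono fun _ hx => And.intro hx.1.1 hx.1.2.subset)
    refine (h1.union (h2.biUnion fun A hA => ih A hA.1.1 hA.1.2)).subset ?_
    intro x hx
    cases hx with
    | base hx hn => exact Or.inl ⟨hx, hn⟩
    | step hA hAB hn h => exact Or.inr (Set.mem_iUnion₂.2 ⟨_, ⟨⟨hA, hAB⟩, hn⟩, h⟩)
  refine ⟨fun B n => {x | CoherentPiece 𝒜 e f n B x}, fun A hA n => ⟨hfin n A hA, hsub n A⟩,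
    fun A _ n => hmono n A, fun A _ => ?_,
    fun A hA B _ hAB => ⟨f B A, fun n hn x hx => CoherentPiece.step hA hAB hn hx⟩⟩
  ext x
  rw [Set.mem_iUnion]
  exact ⟨fun hx => ⟨e A x, CoherentPiece.base hx le_rfl⟩, fun ⟨n, hn⟩ => hsub n A x hn⟩
end

section
/- Let J be a free ideal on a set S and let 𝒜 be a locally small family of sets in ⟨J⟩ such that (𝒜,⊊) is a well-founded partially ordered set. Then 𝒜 has a coherent decomposition. -/
/-!
The decomposition is built by recursion along `⊂` on `𝒜`. Fix for each `B ∈ 𝒜` a cover of `B` by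
sets `f B k ∈ J`, and an injection `c B` into `ℕ` of the countable set of members of `𝒜` contained
in `B`. Put
`D B n = (B ∩ ⋃ k ≤ n, f B k) ∪ ⋃ {D A n | A ∈ 𝒜, A ⊂ B, c B A ≤ n}`.
By injectivity of `c B` the second union is finite, so `D B n ∈ J`. The first part exhausts `B`,
while the second part gives `D A n ⊆ D B n` for all `n ≥ c B A`.
-/

open Cardinal

universe u v

/-- A free ideal on `S`: a proper ideal of subsets of `S` containing every finite set. -/
structure IsFreeIdeal {S : Type u} (J : Set (Set S)) : Prop where
  subset_mem : ∀ ⦃A B : Set S⦄, A ∈ J → B ⊆ A → B ∈ J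
  union_mem : ∀ ⦃A B : Set S⦄, A ∈ J → B ∈ J → A ∪ B ∈ J
  finite_mem : ∀ A : Set S, A.Finite → A ∈ J
  proper : Set.univ ∉ J

/-- The σ-completion `⟨J⟩` of an ideal `J`: the closure of `J` under countable
unions and subsets. -/
def sigmaCompletion {S : Type u} (J : Set (Set S)) : Set (Set S) :=
  { A | ∃ f : ℕ → Set S, (∀ n, f n ∈ J) ∧ A ⊆ ⋃ n, f n }

/-- The family `𝒜 ⊆ ⟨J⟩` has a coherent decomposition: to each `A ∈ 𝒜` one can assign
an increasing sequence of sets from `J` with union `A` such that `A ⊊ B` implies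
eventual coordinatewise inclusion of the decompositions. -/
def HasCoherentDecomposition {S : Type u} (J : Set (Set S)) (𝒜 : Set (Set S)) : Prop :=
  ∃ D : Set S → ℕ → Set S,
    (∀ A ∈ 𝒜, ∀ n : ℕ, D A n ∈ J) ∧
    (∀ A ∈ 𝒜, ∀ n : ℕ, D A n ⊆ D A (n + 1)) ∧
    (∀ A ∈ 𝒜, A = ⋃ n, D A n) ∧
    (∀ A ∈ 𝒜, ∀ B ∈ 𝒜, A ⊂ B → ∃ m : ℕ, ∀ n ≥ m, D A n ⊆ D B n)

lemma IsFreeIdeal.biUnion_mem {S : Type u} {J : Set (Set S)} (hJ : IsFreeIdeal J)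
    {ι : Type*} {t : Set ι} (ht : t.Finite) (g : ι → Set S) (hg : ∀ i ∈ t, g i ∈ J) :
    (⋃ i ∈ t, g i) ∈ J := by
  induction t, ht using Set.Finite.induction_on with
  | empty => simpa using hJ.finite_mem ∅ Set.finite_empty
  | @insert a s _ _ ih =>
    rw [Set.biUnion_insert]
    exact hJ.union_mem (hg a (Set.mem_insert _ _))
      (ih fun i hi => hg i (Set.mem_insert_of_mem _ hi))

/-- Existence of the recursively defined decomposition: the defining equation has a solution. -/
lemma exists_recursive_decomposition {S : Type u} (𝒜 : Set (Set S))
    (hwf : 𝒜.WellFoundedOn (· ⊂ ·)) (f : Set S → ℕ → Set S) (c : Set S → Set S → ℕ) :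
    ∃ D : Set S → ℕ → Set S, ∀ B ∈ 𝒜, ∀ n,
      D B n = (B ∩ ⋃ k ∈ Set.Iic n, f B k) ∪
        ⋃ A ∈ {A | A ∈ 𝒜 ∧ A ⊂ B ∧ c B A ≤ n}, D A n := by
  have wf := Set.wellFoundedOn_iff.1 hwf
  let F : ∀ B : Set S, (∀ A : Set S, (A ⊂ B ∧ A ∈ 𝒜 ∧ B ∈ 𝒜) → ℕ → Set S) → ℕ → Set S :=
    fun B ih n => (B ∩ ⋃ k ∈ Set.Iic n, f B k) ∪
      {x | ∃ A, ∃ h : A ⊂ B ∧ A ∈ 𝒜 ∧ B ∈ 𝒜, c B A ≤ n ∧ x ∈ ih A h n}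
  refine ⟨wf.fix F, fun B hB n => ?_⟩
  rw [wf.fix_eq F B]
  ext x
  simp only [F, Set.mem_union, Set.mem_ofPred_eq, Set.mem_iUnion, exists_prop]
  refine or_congr Iff.rfl (exists_congr fun A => ?_)
  tauto

/-- Corollary 3.3: if `J` is a free ideal and `𝒜 ⊆ ⟨J⟩` is locally small and well-founded
under `⊊`, then `𝒜` has a coherent decomposition. -/
theorem stmt3 {S : Type u} (J : Set (Set S)) (hJ : IsFreeIdeal J)
    (𝒜 : Set (Set S)) (h𝒜 : 𝒜 ⊆ sigmaCompletion J)
    (hls : ∀ X ∈ 𝒜, {Y | Y ∈ 𝒜 ∧ Y ⊆ X}.Countable)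
    (hwf : 𝒜.WellFoundedOn (· ⊂ ·)) :
    HasCoherentDecomposition J 𝒜 := by
  have hcover : ∀ B ∈ 𝒜, ∃ f : ℕ → Set S, (∀ n, f n ∈ J) ∧ B ⊆ ⋃ n, f n := fun B hB => h𝒜 hB
  choose! f hfJ hf using hcover
  have hcode : ∀ B ∈ 𝒜, ∃ c : Set S → ℕ, Set.InjOn c {Y | Y ∈ 𝒜 ∧ Y ⊆ B} :=
    fun B hB => Set.countable_iff_exists_injOn.1 (hls B hB)
  choose! c hc using hcode
  obtain ⟨D, hD⟩ := exists_recursive_decomposition 𝒜 hwf f c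
  have key : ∀ B ∈ 𝒜, (∀ n, D B n ∈ J) ∧ (∀ n, D B n ⊆ D B (n + 1)) ∧ ∀ n, D B n ⊆ B := by
    intro B
    induction B using (Set.wellFoundedOn_iff.1 hwf).induction with
    | _ B ih =>
    intro hB
    refine ⟨fun n => ?_, fun n => ?_, fun n => ?_⟩
    · rw [hD B hB n]
      refine hJ.union_mem (hJ.subset_mem (hJ.biUnion_mem (Set.finite_Iic n) (f B)
        fun k _ => hfJ B hB k) Set.inter_subset_right) ?_
      refine hJ.biUnion_mem ?_ (fun A => D A n) fun A hA => (ih A ⟨hA.2.1, hA.1, hB⟩ hA.1).1 n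
      -- `c B` maps the index set injectively into the finite set `{0, …, n}`.
      have hinj : Set.InjOn (c B) {A | A ∈ 𝒜 ∧ A ⊂ B ∧ c B A ≤ n} :=
        fun A hA A' hA' h => hc B hB ⟨hA.1, hA.2.1.subset⟩ ⟨hA'.1, hA'.2.1.subset⟩ h
      refine Set.Finite.of_finite_image ((Set.finite_Iic n).subset ?_) hinj
      rintro _ ⟨A, hA, rfl⟩
      exact hA.2.2
    · rw [hD B hB n, hD B hB (n + 1)]
      refine Set.union_subset_union (Set.inter_subset_inter_right _
        (Set.biUnion_subset_biUnion_left (Set.Iic_subset_Iic.2 n.le_succ))) ?_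
      exact Set.biUnion_mono (fun A hA => ⟨hA.1, hA.2.1, hA.2.2.trans n.le_succ⟩)
        fun A hA => (ih A ⟨hA.2.1, hA.1, hB⟩ hA.1).2.1 n
    · rw [hD B hB n]
      exact Set.union_subset Set.inter_subset_left (Set.iUnion₂_subset fun A hA =>
        ((ih A ⟨hA.2.1, hA.1, hB⟩ hA.1).2.2 n).trans hA.2.1.subset)
  refine ⟨D, fun A hA => (key A hA).1, fun A hA => (key A hA).2.1, fun A hA => ?_,
    fun A hA B hB hAB => ⟨c B A, fun n hn => ?_⟩⟩
  · refine Set.Subset.antisymm (fun x hx => ?_) (Set.iUnion_subset (key A hA).2.2)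
    obtain ⟨k, hk⟩ := Set.mem_iUnion.1 (hf A hA hx)
    refine Set.mem_iUnion.2 ⟨k, ?_⟩
    rw [hD A hA k]
    exact Or.inl ⟨hx, Set.mem_biUnion (Set.mem_Iic.2 le_rfl) hk⟩
  · rw [hD B hB n]
    exact fun x hx => Or.inr
      (Set.mem_biUnion (⟨hA, hAB, hn⟩ : A ∈ {A | A ∈ 𝒜 ∧ A ⊂ B ∧ c B A ≤ n}) hx)
end

section
/- Let λ be an uncountable cardinal number of countable cofinality and let λ₀ < λ₁ < ⋯ be a sequence of infinite regular cardinals converging to λ. Let (𝒜,⊊) be a well-founded family of sets, each of cardinality λ, such that |{Y ∈ 𝒜 : Y ⊆ X}| ≤ λ for each X ∈ 𝒜. Then there exists for each A ∈ 𝒜 a sequence (Aⁿ : n < ω) such that: |Aⁿ| ≤ λₙ for all n; Aⁿ ⊆ A^{n+1} for all n; A = ⋃ₙ Aⁿ; and whenever A, B ∈ 𝒜 with A ⊊ B there is an m < ω such that Aⁿ ⊆ Bⁿ for all n ≥ m. -/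
/-!
A set of size at most `lam = ⨆ n, lams n` is the union of an increasing sequence of subsets, the
`n`-th of size at most `lams n` (`exists_filtration`). This applies to each `A ∈ 𝒜`, giving sets
`E A n`, and to the family of its proper subsets in `𝒜`, giving families `P A n`. By recursion along
the well-founded relation `⊂`, put `Aⁿ = E A n ∪ ⋃ Y ∈ P A n, Yⁿ` (`Piece`). Each `Aⁿ` is a union of
at most `lams n` sets of size at most `lams n`. If `Y ⊂ A` are in `𝒜`, then `Y ∈ P A n` for all large
`n`, and for those `n` the inclusion `Yⁿ ⊆ Aⁿ` holds by construction.
-/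

open Cardinal

universe u v

/-- A type of cardinality at most `⨆ n, lams n` is exhausted by an increasing sequence of sets of
cardinalities at most `lams n`. -/
theorem exists_filtration (lams : ℕ → Cardinal.{u}) (hmono : Monotone lams)
    (hinf : ∀ n, ℵ₀ ≤ lams n) {α : Type u} (hα : #α ≤ ⨆ n, lams n) :
    ∃ E : ℕ → Set α, Monotone E ∧ (∀ n, #(E n) ≤ lams n) ∧ ∀ x, ∃ n, x ∈ E n := by
  have h : #α ≤ #(Σ n, (lams n).out) := by
    rw [mk_sigma]
    simpa using hα.trans (Cardinal.iSup_le_sum lams)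
  obtain ⟨f⟩ := h
  refine ⟨fun n => {x | (f x).1 ≤ n}, fun a b hab x hx => le_trans hx hab, fun n => ?_,
    fun x => ⟨(f x).1, le_refl (f x).1⟩⟩
  let g : {x | (f x).1 ≤ n} → Σ k : Fin (n + 1), (lams k).out :=
    fun x => ⟨⟨(f x).1, Nat.lt_succ_of_le x.2⟩, (f x).2⟩
  have hg : Function.Injective g := by
    intro x y hxy
    apply Subtype.ext
    apply f.injective
    have := congrArg (fun z : Σ k : Fin (n + 1), (lams k).out =>
      (⟨z.1, z.2⟩ : Σ k : ℕ, (lams k).out)) hxy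
    exact this
  refine (mk_le_of_injective hg).trans ?_
  rw [mk_sigma]
  refine (sum_le_sum _ (fun _ => lams n) fun k => ?_).trans ?_
  · simpa using hmono (Nat.le_of_lt_succ k.2)
  · rw [sum_const]
    simp only [lift_id, mk_fin, lift_natCast, lift_uzero]
    exact mul_le_of_le (hinf n) (natCast_le_aleph0.trans (hinf n)) le_rfl

/-- The `n`-th piece of `A`, as a predicate on points: the least solution of
`Piece A = E A n ∪ ⋃ Y ∈ P A n, Piece Y`. -/
inductive Piece {S : Type u} (E : Set S → ℕ → Set S) (P : Set S → ℕ → Set (Set S)) (n : ℕ) :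
    Set S → S → Prop
  | base {A : Set S} {x : S} (h : x ∈ E A n) : Piece E P n A x
  | step {A Y : Set S} {x : S} (hY : Y ∈ P A n) (h : Piece E P n Y x) : Piece E P n A x

/-- Relative form of `exists_filtration` for a subset of a type. -/
theorem exists_filtration_set (lams : ℕ → Cardinal.{u}) (hmono : Monotone lams)
    (hinf : ∀ n, ℵ₀ ≤ lams n) {α : Type u} (s : Set α) (hs : #s ≤ ⨆ n, lams n) :
    ∃ E : ℕ → Set α, Monotone E ∧ (∀ n, #(E n) ≤ lams n) ∧ s = ⋃ n, E n := by
  obtain ⟨E, h1, h2, h3⟩ := exists_filtration lams hmono hinf hs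
  refine ⟨fun n => Subtype.val '' E n, fun a b hab => Set.image_mono (h1 hab),
    fun n => mk_image_le.trans (h2 n), ?_⟩
  ext x
  simp only [Set.mem_iUnion, Set.mem_image, Subtype.exists, exists_and_right, exists_eq_right]
  constructor
  · intro hx
    obtain ⟨n, hn⟩ := h3 ⟨x, hx⟩
    exact ⟨n, hx, hn⟩
  · rintro ⟨n, hx, -⟩
    exact hx

/-- Theorem 3.9: let `lam` be an uncountable cardinal of countable cofinality and
`lams` an increasing sequence of infinite regular cardinals converging to `lam`. Any
well-founded family `𝒜` of sets of cardinality `lam` with `|{Y ∈ 𝒜 : Y ⊆ X}| ≤ lam`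
for each `X ∈ 𝒜` admits a coherent decomposition with `|Aⁿ| ≤ lams n`. -/
theorem stmt4 {S : Type u} (lam : Cardinal.{u}) (lams : ℕ → Cardinal.{u})
    (hlam : ℵ₀ < lam) (hcof : lam.ord.cof = ℵ₀)
    (hmono : StrictMono lams) (hreg : ∀ n, (lams n).IsRegular)
    (hlt : ∀ n, lams n < lam) (hconv : ⨆ n, lams n = lam)
    (𝒜 : Set (Set S)) (hwf : 𝒜.WellFoundedOn (· ⊂ ·))
    (hcard : ∀ A ∈ 𝒜, #↥A = lam)
    (hloc : ∀ X ∈ 𝒜, #↥{Y | Y ∈ 𝒜 ∧ Y ⊆ X} ≤ lam) :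
    ∃ D : Set S → ℕ → Set S,
      (∀ A ∈ 𝒜, ∀ n : ℕ, #↥(D A n) ≤ lams n) ∧
      (∀ A ∈ 𝒜, ∀ n : ℕ, D A n ⊆ D A (n + 1)) ∧
      (∀ A ∈ 𝒜, A = ⋃ n, D A n) ∧
      (∀ A ∈ 𝒜, ∀ B ∈ 𝒜, A ⊂ B → ∃ m : ℕ, ∀ n ≥ m, D A n ⊆ D B n) := by
  have hinf : ∀ n, ℵ₀ ≤ lams n := fun n => (hreg n).aleph0_le
  have hE : ∀ A : Set S, ∃ E : ℕ → Set S, A ∈ 𝒜 →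
      Monotone E ∧ (∀ n, #(E n) ≤ lams n) ∧ A = ⋃ n, E n := by
    intro A
    by_cases hA : A ∈ 𝒜
    · obtain ⟨E, h⟩ := exists_filtration_set lams hmono.monotone hinf A
        (by rw [hconv, hcard A hA])
      exact ⟨E, fun _ => h⟩
    · exact ⟨fun _ => ∅, fun h => absurd h hA⟩
  have hP : ∀ A : Set S, ∃ P : ℕ → Set (Set S), A ∈ 𝒜 →
      Monotone P ∧ (∀ n, #(P n) ≤ lams n) ∧ {Y | Y ∈ 𝒜 ∧ Y ⊂ A} = ⋃ n, P n := by
    intro A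
    by_cases hA : A ∈ 𝒜
    · obtain ⟨P, h⟩ := exists_filtration_set lams hmono.monotone hinf {Y | Y ∈ 𝒜 ∧ Y ⊂ A}
        (by
          rw [hconv]
          have hsub : {Y | Y ∈ 𝒜 ∧ Y ⊂ A} ⊆ {Y | Y ∈ 𝒜 ∧ Y ⊆ A} :=
            fun Y hY => ⟨hY.1, hY.2.subset⟩
          exact (mk_le_mk_of_subset hsub).trans (hloc A hA))
      exact ⟨P, fun _ => h⟩
    · exact ⟨fun _ => ∅, fun h => absurd h hA⟩
  choose E hE using hE
  choose P hP using hP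
  have hpred : ∀ A ∈ 𝒜, ∀ n, ∀ Y ∈ P A n, Y ∈ 𝒜 ∧ Y ⊂ A := by
    intro A hA n Y hY
    have : Y ∈ {Y | Y ∈ 𝒜 ∧ Y ⊂ A} := by
      rw [(hP A hA).2.2]
      exact Set.mem_iUnion.2 ⟨n, hY⟩
    exact this
  refine ⟨fun A n => {x | Piece E P n A x}, ?_, ?_, ?_, ?_⟩
  · intro A hA n
    refine hwf.induction hA (P := fun A => #{x | Piece E P n A x} ≤ lams n) fun A hA ih => ?_
    have hsub : {x | Piece E P n A x} ⊆
        E A n ∪ ⋃ Y : P A n, {x | Piece E P n Y.1 x} := by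
      intro x hx
      cases hx with
      | base h => exact Or.inl h
      | step hY h => exact Or.inr (Set.mem_iUnion.2 ⟨⟨_, hY⟩, h⟩)
    refine (mk_le_mk_of_subset hsub).trans ((mk_union_le _ _).trans ?_)
    refine add_le_of_le (hinf n) ((hE A hA).2.1 n) ((mk_iUnion_le _).trans ?_)
    refine mul_le_of_le (hinf n) ((hP A hA).2.1 n) (ciSup_le' fun Y => ?_)
    obtain ⟨hY, hYA⟩ := hpred A hA n Y.1 Y.2
    exact ih Y.1 hY hYA
  · intro A hA n x hx
    simp only [Set.mem_ofPred_eq] at hx ⊢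
    induction hx with
    | base h => exact .base ((hE _ hA).1 n.le_succ h)
    | step hY _ ih =>
      exact .step ((hP _ hA).1 n.le_succ hY) (ih (hpred _ hA n _ hY).1)
  · intro A hA
    apply Set.Subset.antisymm
    · intro x hx
      rw [(hE A hA).2.2] at hx
      obtain ⟨n, hn⟩ := Set.mem_iUnion.1 hx
      exact Set.mem_iUnion.2 ⟨n, Piece.base hn⟩
    · intro x hx
      obtain ⟨n, hn⟩ := Set.mem_iUnion.1 hx
      simp only [Set.mem_ofPred_eq] at hn
      clear hx
      induction hn with
      | base h =>
        rw [(hE _ hA).2.2]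
        exact Set.mem_iUnion.2 ⟨n, h⟩
      | step hY _ ih =>
        obtain ⟨hY, hYA⟩ := hpred _ hA n _ hY
        exact hYA.subset (ih hY)
  · intro A hA B hB hAB
    have hmem : A ∈ ⋃ n, P B n := by
      rw [← (hP B hB).2.2]
      exact ⟨hA, hAB⟩
    obtain ⟨m, hm⟩ := Set.mem_iUnion.1 hmem
    exact ⟨m, fun n hn x hx => Piece.step ((hP B hB).1 hn hm) hx⟩
end

section
/- Let x, y ∈ 2^ω and let f, g ∈ ω^ω be strictly increasing. The following are equivalent: (1) B_{x,f} ⊊ B_{y,g}; (2) B_{x,f} ≠ B_{y,g}, and for all but finitely many n there is a k such that g(n) ≤ f(k) < f(k+1) ≤ g(n+1) and x↾[f(k),f(k+1)) = y↾[f(k),f(k+1)). -/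
/-!
Since a proper inclusion is an inclusion together with distinctness, the theorem reduces to a
characterization of `BSet x f ⊆ BSet y g`.

If almost every block `[g n, g (n+1))` contains an `f`-block on which `x` and `y` agree, then a
point differing from `x` on that `f`-block differs from `y` on the `g`-block, which gives the
inclusion. Conversely, suppose infinitely many `n` are bad, that is, no such `f`-block exists.
Infinitely many bad `n` have the same parity, so there is an infinite set `A` of bad indices with
no two consecutive members. Let `z` be `y` on the `g`-blocks indexed by `A` and the complement of
`x` elsewhere. Then `z ∉ BSet y g`. An `f`-block meeting the complement of the `A`-blocks has a
point where `z` differs from `x`; any other `f`-block lies inside a single `A`-block, because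
`A`-blocks are never adjacent, and badness gives a point where `z = y` differs from `x`.
Hence `z ∈ BSet x f`, so the inclusion fails.
-/

open Cardinal

universe u v

/-- `BSet x f` : the set of `z` in Cantor space such that for all but finitely many `n`,
the restriction of `z` to `[f n, f (n+1))` differs from that of `x`. -/
def BSet (x : ℕ → Bool) (f : ℕ → ℕ) : Set (ℕ → Bool) :=
  { z | ∃ N : ℕ, ∀ n ≥ N, ∃ i : ℕ, f n ≤ i ∧ i < f (n + 1) ∧ z i ≠ x i }

/-- `BnSet x f n` : the set of `z` in Cantor space such that for every `k ≥ n`, the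
restriction of `z` to `[f k, f (k+1))` differs from that of `x`. -/
def BnSet (x : ℕ → Bool) (f : ℕ → ℕ) (n : ℕ) : Set (ℕ → Bool) :=
  { z | ∀ k ≥ n, ∃ i : ℕ, f k ≤ i ∧ i < f (k + 1) ∧ z i ≠ x i }

/-- The block `[g n, g (n+1))` contains an `f`-block on which `x` and `y` agree. -/
def GoodBlock (x y : ℕ → Bool) (f g : ℕ → ℕ) (n : ℕ) : Prop :=
  ∃ k : ℕ, g n ≤ f k ∧ f k < f (k + 1) ∧ f (k + 1) ≤ g (n + 1) ∧
    ∀ i : ℕ, f k ≤ i → i < f (k + 1) → x i = y i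

lemma subset_of_goodBlock {x y : ℕ → Bool} {f g : ℕ → ℕ} (hf : StrictMono f)
    (hg : StrictMono g) {N : ℕ} (hN : ∀ n ≥ N, GoodBlock x y f g n) :
    BSet x f ⊆ BSet y g := by
  rintro z ⟨M, hM⟩
  -- For `n ≥ f M`, an `f`-block starting at or after `g n ≥ n` has index at least `M`.
  refine ⟨max N (f M), fun n hn => ?_⟩
  obtain ⟨k, h1, -, h3, h4⟩ := hN n (le_trans (le_max_left _ _) hn)
  have hMk : M ≤ k := hf.le_iff_le.1
    (((le_max_right _ _).trans hn).trans ((hg.le_apply (x := n)).trans h1))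
  obtain ⟨i, hi1, hi2, hi3⟩ := hM k hMk
  exact ⟨i, h1.trans hi1, hi2.trans_le h3, by rwa [← h4 i hi1 hi2]⟩

/-- An infinite set of natural numbers has infinitely many members of one parity. -/
lemma exists_parity {P : ℕ → Prop} (h : ∀ N, ∃ n ≥ N, P n) :
    ∃ p, ∀ N, ∃ n ≥ N, n % 2 = p ∧ P n := by
  by_contra! hc
  obtain ⟨N₀, h₀⟩ := hc 0
  obtain ⟨N₁, h₁⟩ := hc 1
  obtain ⟨n, hn, hP⟩ := h (max N₀ N₁)
  rcases Nat.mod_two_eq_zero_or_one n with h | h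
  · exact h₀ n (le_trans (le_max_left _ _) hn) h hP
  · exact h₁ n (le_trans (le_max_right _ _) hn) h hP

lemma goodBlock_of_subset {x y : ℕ → Bool} {f g : ℕ → ℕ} (hf : StrictMono f)
    (hg : StrictMono g) (hsub : BSet x f ⊆ BSet y g) :
    ∃ N, ∀ n ≥ N, GoodBlock x y f g n := by
  classical
  by_contra! hbad
  obtain ⟨p, hp⟩ := exists_parity hbad
  -- `C i` says that `i` lies in a bad `g`-block whose index has parity `p`.
  let C : ℕ → Prop := fun i =>
    ∃ n, (n % 2 = p ∧ ¬ GoodBlock x y f g n) ∧ g n ≤ i ∧ i < g (n + 1)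
  let z : ℕ → Bool := fun i => if C i then y i else !(x i)
  have hzC : ∀ i, C i → z i = y i := fun i hi => if_pos hi
  have hznC : ∀ i, ¬ C i → z i ≠ x i := fun i hi => by simp [z, hi]
  have hz : z ∈ BSet x f := by
    refine ⟨0, fun k _ => ?_⟩
    by_contra! hk
    have hlt : f k < f (k + 1) := hf (Nat.lt_succ_self k)
    have hall : ∀ i, f k ≤ i → i < f (k + 1) → C i := fun i h1 h2 => by
      by_contra hC
      exact hznC i hC (hk i h1 h2)
    obtain ⟨n, ⟨hnp, hnb⟩, hn1, hn2⟩ := hall (f k) le_rfl hlt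
    refine hnb ⟨k, hn1, hlt, ?_, fun i h1 h2 => ?_⟩
    · -- Otherwise the point `g (n + 1)` is covered, which puts `n + 1` in the same parity class.
      by_contra! hlong
      obtain ⟨m, ⟨hmp, -⟩, hm1, hm2⟩ := hall (g (n + 1)) hn2.le hlong
      have h1 := hg.le_iff_le.1 hm1
      have h2 := hg.lt_iff_lt.1 hm2
      omega
    · rw [← hk i h1 h2, hzC i (hall i h1 h2)]
  obtain ⟨M, hM⟩ := hsub hz
  obtain ⟨n, hn, hA⟩ := hp M
  obtain ⟨i, h1, h2, h3⟩ := hM n hn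
  exact h3 (hzC i ⟨n, hA, h1, h2⟩)

/-- Proposition 3.5: `B_{x,f} ⊊ B_{y,g}` iff they are distinct and for all but finitely
many `n` some block `[f k, f (k+1))` fits inside `[g n, g (n+1))` on which `x` and `y`
agree. -/
theorem stmt5 (x y : ℕ → Bool) (f g : ℕ → ℕ) (hf : StrictMono f) (hg : StrictMono g) :
    BSet x f ⊂ BSet y g ↔
      (BSet x f ≠ BSet y g ∧
        ∃ N : ℕ, ∀ n ≥ N, ∃ k : ℕ, g n ≤ f k ∧ f k < f (k + 1) ∧ f (k + 1) ≤ g (n + 1) ∧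
          ∀ i : ℕ, f k ≤ i → i < f (k + 1) → x i = y i) := by
  rw [ssubset_iff_subset_ne, and_comm]
  refine and_congr_right fun _ => ⟨fun h => goodBlock_of_subset hf hg h, ?_⟩
  rintro ⟨N, hN⟩
  exact subset_of_goodBlock hf hg hN
end

section
/- Let x, y ∈ 2^ω and let f, g ∈ ω^ω be strictly increasing. If B_{x,f} ⊊ B_{y,g}, then f ≪ g. -/
/-!
The inclusion `B_{x,f} ⊆ B_{y,g}` forces almost every interval `[g n, g (n+1))` to contain an
interval `[f k, f (k+1))` on which `x` and `y` agree (`exists_block_of_subset`): otherwise a point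
copying `y` on infinitely many pairwise non-adjacent bad `g`-intervals, and equal to the complement
of `x` elsewhere, would lie in `B_{x,f}` but not in `B_{y,g}`.

Pick such a `k n` for every large `n`. Then `k n + 1 ≤ k (n+1)`, so `k n - n` is nondecreasing.
If it is unbounded, then `g (n+1) ≥ f (k n + 1) ≥ f (n+1) + (k n - n)` gives `f ≪ g`. If it is
bounded, it is eventually a constant `d`; then `g n = f (n+d)` and `x`, `y` agree from some point
on, so `B_{x,f} = B_{y,g}`, contrary to properness of the inclusion.
-/

open Cardinal

universe u v

/-- `f ≪ g` : `g` eventually dominates `f`, i.e. `g n - f n → ∞`. -/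
def evDominates (f g : ℕ → ℕ) : Prop :=
  Filter.Tendsto (fun n => (g n : ℤ) - (f n : ℤ)) Filter.atTop Filter.atTop

/-- If `B_{x,f} ⊆ B_{y,g}`, almost every `g`-interval contains an `f`-interval on which `x` and `y`
coincide. -/
lemma exists_block_of_subset (x y : ℕ → Bool) (f g : ℕ → ℕ) (hf : StrictMono f)
    (hg : StrictMono g) (h : BSet x f ⊆ BSet y g) :
    ∃ N, ∀ n ≥ N, ∃ k, g n ≤ f k ∧ f (k + 1) ≤ g (n + 1) ∧
      ∀ i, f k ≤ i → i < f (k + 1) → x i = y i := by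
  classical
  by_contra hcon
  set S : ℕ → Prop := fun n => ¬ ∃ k, g n ≤ f k ∧ f (k + 1) ≤ g (n + 1) ∧
      ∀ i, f k ≤ i → i < f (k + 1) → x i = y i with hS
  have hinf : ∀ N, ∃ n ≥ N, S n := by
    intro N
    by_contra hN
    refine hcon ⟨N, fun n hn => ?_⟩
    by_contra hk
    exact hN ⟨n, hn, hk⟩
  -- Restricting to one parity class makes the chosen bad intervals pairwise non-adjacent.
  obtain ⟨r, hr⟩ : ∃ r, ∀ N, ∃ n ≥ N, S n ∧ n % 2 = r := by
    by_contra hno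
    push Not at hno
    obtain ⟨N0, h0⟩ := hno 0
    obtain ⟨N1, h1⟩ := hno 1
    obtain ⟨n, hn, hSn⟩ := hinf (max N0 N1)
    have a0 := h0 n (le_trans (le_max_left _ _) hn) hSn
    have a1 := h1 n (le_trans (le_max_right _ _) hn) hSn
    omega
  let z : ℕ → Bool := fun i =>
    if ∃ n, (S n ∧ n % 2 = r) ∧ g n ≤ i ∧ i < g (n + 1) then y i else !x i
  have hz : z ∈ BSet x f := by
    refine ⟨0, fun k _ => ?_⟩
    by_contra hk
    have key : ∀ i, f k ≤ i → i < f (k + 1) →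
        (∃ n, (S n ∧ n % 2 = r) ∧ g n ≤ i ∧ i < g (n + 1)) ∧ x i = y i := by
      intro i h1 h2
      have hzi : z i = x i := by
        by_contra hne
        exact hk ⟨i, h1, h2, hne⟩
      by_cases hc : ∃ n, (S n ∧ n % 2 = r) ∧ g n ≤ i ∧ i < g (n + 1)
      · refine ⟨hc, ?_⟩
        simp only [z, if_pos hc] at hzi
        exact hzi.symm
      · simp only [z, if_neg hc] at hzi
        cases hx : x i <;> simp [hx] at hzi
    obtain ⟨⟨n, ⟨hSn, hnr⟩, hgn, hgn1⟩, -⟩ := key (f k) le_rfl (hf (Nat.lt_succ_self k))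
    refine hSn ⟨k, hgn, ?_, fun i h1 h2 => (key i h1 h2).2⟩
    -- Otherwise `g (n+1)` lies in the `f`-interval, so `n+1` is a chosen index as well.
    by_contra hlt
    obtain ⟨⟨m, ⟨-, hmr⟩, hgm, hgm1⟩, -⟩ := key (g (n + 1)) hgn1.le (not_le.mp hlt)
    have e1 := hg.le_iff_le.mp hgm
    have e2 := hg.lt_iff_lt.mp hgm1
    omega
  obtain ⟨N, hN⟩ := h hz
  obtain ⟨n, hn, hSn⟩ := hr N
  obtain ⟨i, h1, h2, h3⟩ := hN n hn
  exact h3 (if_pos ⟨n, hSn, h1, h2⟩)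

/-- Proposition 3.7: if `B_{x,f} ⊊ B_{y,g}` then `g` eventually dominates `f`. -/
theorem stmt6 (x y : ℕ → Bool) (f g : ℕ → ℕ) (hf : StrictMono f) (hg : StrictMono g)
    (h : BSet x f ⊂ BSet y g) : evDominates f g := by
  obtain ⟨N, hN⟩ := exists_block_of_subset x y f g hf hg h.1
  choose! k hk1 hk2 hk3 using hN
  have hstep : ∀ n ≥ N, k n + 1 ≤ k (n + 1) := fun n hn =>
    hf.le_iff_le.mp ((hk2 n hn).trans (hk1 (n + 1) (by omega)))
  have hmono : ∀ m ≥ N, ∀ n ≥ m, (k m : ℤ) - m ≤ (k n : ℤ) - n := by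
    intro m hm n hn
    induction n, hn using Nat.le_induction with
    | base => exact le_rfl
    | succ n hmn ih =>
      have := hstep n (by omega)
      push_cast
      omega
  by_cases hunb : ∀ C : ℤ, ∃ n ≥ N, C ≤ (k n : ℤ) - n
  · refine Filter.tendsto_atTop.mpr fun C => ?_
    obtain ⟨m, hm, hC⟩ := hunb (max C 0)
    filter_upwards [Filter.eventually_ge_atTop (m + 1)] with n hn
    obtain ⟨p, rfl⟩ : ∃ p, n = p + 1 := ⟨n - 1, by omega⟩
    have h1 := hmono m hm p (by omega)
    have h2 := hk2 p (by omega)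
    obtain ⟨e, he⟩ : ∃ e, k p = p + e := ⟨k p - p, by omega⟩
    have h3 := hf.add_le_nat e (p + 1)
    have h4 : e + (p + 1) = k p + 1 := by omega
    have h5 : f (p + 1) + e ≤ f (k p + 1) := by
      rw [← h4]
      omega
    omega
  · exfalso
    push Not at hunb
    obtain ⟨C, hC⟩ := hunb
    obtain ⟨d, ⟨m, hm, hmd⟩, hd⟩ := Int.exists_greatest_of_bdd
      (P := fun d : ℤ => ∃ n ≥ N, (k n : ℤ) - n = d)
      ⟨C, by rintro _ ⟨n, hn, rfl⟩; exact (hC n hn).le⟩ ⟨_, N, le_rfl, rfl⟩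
    have hconst : ∀ n ≥ m, (k n : ℤ) - n = d := fun n hn =>
      le_antisymm (hd _ ⟨n, hn.le.trans' hm, rfl⟩) (hmd ▸ hmono m hm n hn)
    have hgf : ∀ n ≥ m, g (n + 1) = f (k (n + 1)) := by
      intro n hn
      have e1 := hconst n hn
      have e2 := hconst (n + 1) (by omega)
      have e3 : k (n + 1) = k n + 1 := by
        push_cast at e2
        omega
      exact le_antisymm (hk1 _ (by omega)) (e3 ▸ hk2 n (by omega))
    refine h.2 ?_
    rintro z ⟨M, hM⟩
    refine ⟨k (max m M + 1), fun j hj => ?_⟩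
    -- Every large index `j` is of the form `k (n+1)`, since `k` is eventually the shift by `d`.
    obtain ⟨n, hn⟩ : ∃ n : ℕ, (n : ℤ) + 1 = j - d := by
      have := hconst (max m M + 1) (by omega)
      exact ⟨((j : ℤ) - d - 1).toNat, by push_cast at this; omega⟩
    have hmax := hconst (max m M + 1) (by omega)
    have hnm : max m M ≤ n := by
      push_cast at hmax
      omega
    have c1 := hconst (n + 1) (by omega)
    have c2 := hconst (n + 1 + 1) (by omega)
    have hj1 : k (n + 1) = j := by
      push_cast at c1
      omega
    have hj2 : k (n + 1 + 1) = j + 1 := by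
      push_cast at c2
      omega
    have g1 := hgf n (by omega)
    have g2 := hgf (n + 1) (by omega)
    rw [hj1] at g1
    rw [hj2] at g2
    obtain ⟨i, i1, i2, i3⟩ := hM (n + 1) (by omega)
    rw [g1] at i1
    rw [g2] at i2
    refine ⟨i, i1, i2, ?_⟩
    rw [hk3 (n + 1) (by omega) i (by rwa [hj1]) (by rwa [hj1])]
    exact i3
end

section
/- Let x, y ∈ 2^ω and let f, g ∈ ω^ω be strictly increasing. If B_{x,f} ⊊ B_{y,g}, then there is an m < ω such that Bⁿ_{x,f} ⊆ Bⁿ_{y,g} for all n ≥ m. -/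
/-!
Write `I k = [f k, f (k+1))` and `J j = [g j, g (j+1))`.

The inclusion `B_{x,f} ⊆ B_{y,g}` forces, for all large `j`, some `I (k j) ⊆ J j` on which `x = y`
(`eventually_exists_block`): otherwise infinitely many bad `j` have the same parity, and the point
that agrees with `y` on the corresponding `J j` and with the complement of `x` elsewhere lies in
`B_{x,f}` but not in `B_{y,g}`.

The map `k` is strictly increasing. If `k m ≥ m` for some large `m`, then `k j ≥ j` for all `j ≥ m`,
which gives `Bⁿ_{x,f} ⊆ Bⁿ_{y,g}` for all `n ≥ m`. Otherwise `j - k j` is positive and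
nonincreasing, hence eventually a constant `c`; then the blocks `I n` and `J (n + c)` coincide for
large `n`, with `x = y` on them, so `B_{x,f} = B_{y,g}`, contrary to properness.
-/

open Cardinal

universe u v

/-- The block `[f k, f (k+1))` lies inside `[g j, g (j+1))`, and `x` and `y` agree on it. -/
def BlockIn (x y : ℕ → Bool) (f g : ℕ → ℕ) (k j : ℕ) : Prop :=
  g j ≤ f k ∧ f (k + 1) ≤ g (j + 1) ∧ ∀ i, f k ≤ i → i < f (k + 1) → x i = y i

lemma block_unique {g : ℕ → ℕ} (hg : StrictMono g) {i a b : ℕ} (ha : g a ≤ i)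
    (ha' : i < g (a + 1)) (hb : g b ≤ i) (hb' : i < g (b + 1)) : a = b := by
  have h1 : a < b + 1 := hg.lt_iff_lt.1 (ha.trans_lt hb')
  have h2 : b < a + 1 := hg.lt_iff_lt.1 (hb.trans_lt ha')
  omega

lemma eventually_exists_block (x y : ℕ → Bool) (f g : ℕ → ℕ) (hf : StrictMono f)
    (hg : StrictMono g) (h : BSet x f ⊆ BSet y g) :
    ∃ N, ∀ j ≥ N, ∃ k, BlockIn x y f g k j := by
  classical
  by_contra! hbad
  -- Bad indices of a single parity: no two of the chosen blocks of `g` are adjacent.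
  obtain ⟨e, he⟩ : ∃ e, ∀ N, ∃ j ≥ N, (∀ k, ¬ BlockIn x y f g k j) ∧ j % 2 = e := by
    by_contra! hc
    obtain ⟨N₀, h₀⟩ := hc 0
    obtain ⟨N₁, h₁⟩ := hc 1
    obtain ⟨j, hj, hb⟩ := hbad (max N₀ N₁)
    have := h₀ j (le_of_max_le_left hj) hb
    have := h₁ j (le_of_max_le_right hj) hb
    omega
  let P : ℕ → Prop := fun i =>
    ∃ j, (∀ k, ¬ BlockIn x y f g k j) ∧ j % 2 = e ∧ g j ≤ i ∧ i < g (j + 1)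
  let z : ℕ → Bool := fun i => if P i then y i else !x i
  have hzP : ∀ i, P i → z i = y i := fun i hi => if_pos hi
  have hzx : ∀ i, z i = x i → P i := by
    intro i hi
    by_contra hP
    have : z i = !x i := if_neg hP
    rw [this] at hi
    cases hx : x i <;> simp [hx] at hi
  have hz : z ∈ BSet x f := by
    refine ⟨0, fun k _ => ?_⟩
    by_contra! hk
    have hlt : f k < f (k + 1) := hf (Nat.lt_succ_self k)
    obtain ⟨j, hjb, hje, hj1, hj2⟩ := hzx _ (hk (f k) le_rfl hlt)
    rcases le_or_gt (f (k + 1)) (g (j + 1)) with hle | hgt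
    · refine hjb k ⟨hj1, hle, fun i hi hi' => ?_⟩
      rw [← hk i hi hi']
      exact hzP i ⟨j, hjb, hje, hj1.trans hi, hi'.trans_le hle⟩
    · -- `g (j + 1)` lies in the block of `f`, so the next block of `g` would be chosen too.
      obtain ⟨j', _, hje', h1, h2⟩ := hzx _ (hk (g (j + 1)) hj2.le hgt)
      have := block_unique hg h1 h2 le_rfl (hg (Nat.lt_succ_self (j + 1)))
      omega
  obtain ⟨N, hN⟩ := h hz
  obtain ⟨j, hj, hb, hje⟩ := he N
  obtain ⟨i, h1, h2, h3⟩ := hN j hj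
  exact h3 (hzP i ⟨j, hb, hje, h1, h2⟩)

/-- Proposition 3.8: if `B_{x,f} ⊊ B_{y,g}` then `Bⁿ_{x,f} ⊆ Bⁿ_{y,g}` for all
sufficiently large `n`. -/
theorem stmt7 (x y : ℕ → Bool) (f g : ℕ → ℕ) (hf : StrictMono f) (hg : StrictMono g)
    (h : BSet x f ⊂ BSet y g) :
    ∃ m : ℕ, ∀ n ≥ m, BnSet x f n ⊆ BnSet y g n := by
  obtain ⟨N, hN⟩ := eventually_exists_block x y f g hf hg h.1
  choose! k hk using hN
  have hstep : ∀ j ≥ N, k j < k (j + 1) := by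
    intro j hj
    have h1 := (hk j hj).2.1
    have h2 := (hk (j + 1) (by omega)).1
    have h3 : f (k j) < f (k j + 1) := hf (Nat.lt_succ_self _)
    exact hf.lt_iff_lt.1 (by omega)
  have hgrow : ∀ m ≥ N, ∀ d, k m + d ≤ k (m + d) := by
    intro m hm d
    induction d with
    | zero => simp
    | succ d ih =>
      have := hstep (m + d) (by omega)
      rw [← add_assoc m d 1]
      omega
  by_cases hc : ∃ m ≥ N, m ≤ k m
  · obtain ⟨m, hm, hmk⟩ := hc
    refine ⟨m, fun n hn z hz j hj => ?_⟩
    have hkj : j ≤ k j := by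
      have := hgrow m hm (j - m)
      rw [show m + (j - m) = j by omega] at this
      omega
    obtain ⟨h1, h2, h3⟩ := hk j (by omega)
    obtain ⟨i, hi1, hi2, hi3⟩ := hz (k j) (by omega)
    exact ⟨i, h1.trans hi1, hi2.trans_le h2, by rwa [← h3 i hi1 hi2]⟩
  · exfalso
    push Not at hc
    -- From an index `M` minimizing `j - k j` on, this difference is constant.
    obtain ⟨M, hM, hmin⟩ : ∃ M ≥ N, ∀ j ≥ N, M - k M ≤ j - k j := by
      obtain ⟨M, hM, hmin⟩ := exists_minimalFor_of_wellFoundedLT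
        (fun j => N ≤ j) (fun j => j - k j) ⟨N, le_rfl⟩
      refine ⟨M, hM, fun j hj => ?_⟩
      rcases le_total (M - k M) (j - k j) with h' | h'
      · exact h'
      · exact hmin hj h'
    obtain ⟨c, hcM⟩ : ∃ c, c = M - k M := ⟨_, rfl⟩
    have hconst : ∀ j ≥ M, k j + c = j := by
      intro j hj
      have h1 := hgrow M hM (j - M)
      rw [show M + (j - M) = j by omega] at h1
      have h2 := hmin j (by omega)
      have h3 := hc j (by omega)
      have h4 := hc M hM
      omega
    have heq : ∀ n ≥ M + 1, f n = g (n + c) := by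
      intro n hn
      have e1 := hconst (n + c) (by omega)
      have e2 := hconst (n + c - 1) (by omega)
      have h1 := (hk (n + c) (by omega)).1
      have h2 := (hk (n + c - 1) (by omega)).2.1
      rw [show k (n + c) = n by omega] at h1
      rw [show k (n + c - 1) + 1 = n by omega, show n + c - 1 + 1 = n + c by omega] at h2
      omega
    refine h.2 fun z hz => ?_
    obtain ⟨N', hN'⟩ := hz
    refine ⟨max N' (M + 1), fun n hn => ?_⟩
    have hn1 : N' ≤ n := le_of_max_le_left hn
    have hn2 : M + 1 ≤ n := le_of_max_le_right hn
    obtain ⟨i, hi1, hi2, hi3⟩ := hN' (n + c) (by omega)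
    have e1 := hconst (n + c) (by omega)
    have h3 := (hk (n + c) (by omega)).2.2
    rw [show k (n + c) = n by omega] at h3
    rw [← heq n hn2] at hi1
    rw [show n + c + 1 = n + 1 + c by omega, ← heq (n + 1) (by omega)] at hi2
    exact ⟨i, hi1, hi2, by rwa [h3 i hi1 hi2]⟩
end

section
/- For every meager subset X of Cantor space 2^ω there exist x ∈ 2^ω and a strictly increasing f ∈ ω^ω such that X ⊆ B_{x,f}. -/
/-!
The complement of `X` contains some `⋂ n, D n` with `D n` open, dense and decreasing in `n`.
Given `a`, there are only finitely many patterns on `[0, a)`, so successive extensions yield one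
pattern on a block `[a, m)` which forces membership in `D n` whatever precedes it
(`exists_forcing_block`). Iterating gives consecutive blocks `[f n, f (n+1))` and a point `x` such
that any `z` agreeing with `x` on the `n`-th block lies in `D n`. A point outside `BSet x f` agrees
with `x` on infinitely many blocks, so it lies in infinitely many `D n`, hence in all of them, and
therefore not in `X`.
-/

open Cardinal

universe u v

/-- The pattern `y` on `[a, m)` forces membership in `U` after each of the finitely many initial
segments in `T`; it is extended by induction on `T`. -/
lemma exists_forcing_block_of_finset {U : Set (ℕ → Bool)} (hU : IsOpen U) (hd : Dense U) (a : ℕ)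
    (T : Finset (Fin a → Bool)) :
    ∃ (m : ℕ) (y : ℕ → Bool), a < m ∧ ∀ z : ℕ → Bool, (fun i : Fin a => z i) ∈ T →
      (∀ i, a ≤ i → i < m → z i = y i) → z ∈ U := by
  classical
  induction T using Finset.induction_on with
  | empty => exact ⟨a + 1, fun _ => false, by omega, by simp⟩
  | insert w T _ ih =>
    obtain ⟨m, y, ham, hy⟩ := ih
    let p : ℕ → Bool := fun i => if h : i < a then w ⟨i, h⟩ else y i
    obtain ⟨q, hqp, hqU⟩ := hd.inter_open_nonempty _
      (PiNat.isOpen_cylinder (fun _ => Bool) p m) ⟨p, PiNat.self_mem_cylinder p m⟩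
    obtain ⟨_, ⟨q', k, rfl⟩, hqk, hkU⟩ :=
      (PiNat.isTopologicalBasis_cylinders (fun _ => Bool)).exists_subset_of_mem_open hqU hU
    rw [PiNat.mem_cylinder_iff] at hqp hqk
    refine ⟨max m k, q, by omega, fun z hzT hz => ?_⟩
    rcases Finset.mem_insert.1 hzT with hzw | hzT
    · apply hkU
      rw [PiNat.mem_cylinder_iff]
      intro i hi
      rw [← hqk i hi]
      by_cases hia : i < a
      · rw [hqp i (by omega)]
        simpa [p, hia] using congrFun hzw ⟨i, hia⟩
      · exact hz i (by omega) (by omega)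
    · refine hy z hzT fun i hai him => ?_
      rw [hz i hai (by omega), hqp i him]
      simp [p, hai]

lemma exists_forcing_block {U : Set (ℕ → Bool)} (hU : IsOpen U) (hd : Dense U) (a : ℕ) :
    ∃ (m : ℕ) (y : ℕ → Bool), a < m ∧ ∀ z : ℕ → Bool,
      (∀ i, a ≤ i → i < m → z i = y i) → z ∈ U := by
  obtain ⟨m, y, h, hy⟩ := exists_forcing_block_of_finset hU hd a Finset.univ
  exact ⟨m, y, h, fun z => hy z (Finset.mem_univ _)⟩

lemma exists_antitone_open_dense {X : Set (ℕ → Bool)} (hX : IsMeagre X) :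
    ∃ D : ℕ → Set (ℕ → Bool), (∀ n, IsOpen (D n)) ∧ (∀ n, Dense (D n)) ∧ Antitone D ∧
      ⋂ n, D n ⊆ Xᶜ := by
  obtain ⟨S, hSo, hSd, hSc, hSX⟩ := mem_residual_iff.1 hX
  -- Adjoining the whole space makes the family nonempty, so that a sequence can enumerate it.
  obtain ⟨U, hU⟩ := (hSc.insert Set.univ).exists_eq_range (Set.insert_nonempty _ _)
  have hUm : ∀ n, U n = Set.univ ∨ U n ∈ S := fun n => by
    have : U n ∈ insert Set.univ S := hU ▸ Set.mem_range_self n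
    simpa using this
  have hUo : ∀ n, IsOpen (U n) := fun n => by
    rcases hUm n with h | h
    · rw [h]; exact isOpen_univ
    · exact hSo _ h
  have hUd : ∀ n, Dense (U n) := fun n => by
    rcases hUm n with h | h
    · rw [h]; exact dense_univ
    · exact hSd _ h
  refine ⟨fun n => ⋂ k ∈ Set.Iic n, U k,
    fun n => (Set.finite_Iic n).isOpen_biInter fun k _ => hUo k,
    fun n => dense_biInter_of_isOpen (fun k _ => hUo k) (Set.to_countable _) fun k _ => hUd k,
    fun m n hmn => Set.biInter_subset_biInter_left (Set.Iic_subset_Iic.2 hmn), ?_⟩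
  refine fun z hz => hSX fun s hs => ?_
  have : s ∈ Set.range U := hU ▸ Set.mem_insert_of_mem _ hs
  obtain ⟨n, rfl⟩ := this
  exact Set.mem_iInter₂.1 (Set.mem_iInter.1 hz n) n (Set.mem_Iic.2 le_rfl)

/-- Proposition 3.9 (cofinality): every meager subset of Cantor space is contained in a
set of the form `B_{x,f}` with `f` strictly increasing. -/
theorem stmt8 (X : Set (ℕ → Bool)) (hX : IsMeagre X) :
    ∃ (x : ℕ → Bool) (f : ℕ → ℕ), StrictMono f ∧ X ⊆ BSet x f := by
  obtain ⟨D, hDo, hDd, hDa, hDX⟩ := exists_antitone_open_dense hX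
  choose M Y hM hY using fun n a => exists_forcing_block (hDo n) (hDd n) a
  let f : ℕ → ℕ := fun n => Nat.rec (motive := fun _ => ℕ) 0 (fun k a => M k a) n
  have hf : StrictMono f := strictMono_nat_of_lt_succ fun n => hM n (f n)
  -- The blocks are disjoint, so the block patterns glue to a single point.
  have hglue : ∀ i, ∃ b : Bool, ∀ n, f n ≤ i → i < f (n + 1) → b = Y n (f n) i := by
    intro i
    rcases Classical.em (∃ n, f n ≤ i ∧ i < f (n + 1)) with h | h
    · obtain ⟨n, h1, h2⟩ := h
      refine ⟨Y n (f n) i, fun k h3 h4 => ?_⟩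
      have h5 : n < k + 1 := hf.lt_iff_lt.1 (h1.trans_lt h4)
      have h6 : k < n + 1 := hf.lt_iff_lt.1 (h3.trans_lt h2)
      obtain rfl : n = k := by omega
      rfl
    · exact ⟨false, fun n h1 h2 => (h ⟨n, h1, h2⟩).elim⟩
  choose x hx using hglue
  refine ⟨x, f, hf, fun z hzX => ?_⟩
  by_contra hz
  simp only [BSet, Set.mem_ofPred_eq] at hz
  push Not at hz
  refine hDX (Set.mem_iInter.2 fun N => ?_) hzX
  obtain ⟨n, hn, h⟩ := hz N
  exact hDa hn (hY n (f n) z fun i h1 h2 => (h i h1 h2).trans (hx i n h1 h2))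
end

section
/- Let J be a free ideal on a set S. If 𝒜 is a family of sets in ⟨J⟩ such that: (1) for each X ∈ 𝒜 there is a Y ∈ 𝒜 with X ⊊ Y; (2) (𝒜,⊊) ↛ (ω-path)ᵏ_{ω/<ω} for some k ≥ 2; and (3) 𝒜 has a coherent decomposition; then TWO has a winning k-tactic in MG(𝒜,J). -/
/-!
Let `F` colour the `k`-element subsets of `𝒜` by natural numbers so that no increasing
`ω`-path sees only finitely many colours, and let `D` be a coherent decomposition with
`D A n ⊆ D B n` for all `n ≥ m A B` whenever `A ⊂ B`.  On seeing the window `(X_1, …, X_j)`, TWO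
computes its level `N`, the maximum of the colour `F {X_1, …, X_j}` and of `m X_{j-1} X_j`, and
answers with `D X_j N`.

Along a play `O`, the levels `N_n` are unbounded by the choice of `F`.  Given `x ∈ D (O i) q`,
take the first inning `j` whose level exceeds both `q` and every level up to inning `i`.  All
earlier levels are then below `N_j`, so `N_j ≥ m (O t) (O (t+1))` for all `t < j`, and coherence
gives `x ∈ D (O i) N_j ⊆ D (O (i+1)) N_j ⊆ ⋯ ⊆ D (O j) N_j`, which is TWO's answer in inning `j`.
-/

open Cardinal

universe u v

/-- The ω-path partition relation `(P,<) → (ω-path)ⁿ_{Λ/<ω}`: for every coloring `F` of the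
`n`-element subsets of `P` by `Λ` there is a strictly increasing ω-sequence `p` in `P` such
that the set of colors of consecutive `n`-element segments `{p (j+1), …, p (j+n)}` is finite. -/
def OmegaPath (P : Type u) [Preorder P] (n : ℕ) (Λ : Type v) : Prop :=
  letI : DecidableEq P := Classical.decEq P
  ∀ F : Finset P → Λ, ∃ p : ℕ → P, StrictMono p ∧
    (Set.range fun j : ℕ => F ((Finset.range n).image fun i => p (j + 1 + i))).Finite

/-- The `min (n+1) k` most recent moves `[O (n+1-m), …, O n]` of the sequence `O`
of moves of player ONE (innings indexed from `0`). -/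
def window {α : Type*} (k : ℕ) (O : ℕ → α) (n : ℕ) : List α :=
  (List.range (min (n + 1) k)).map fun i => O (n + 1 - min (n + 1) k + i)

/-- TWO has a winning `k`-tactic in the game `MG(𝒜,J)`: there is a function `Υ` mapping
each nonempty `⊊`-increasing tuple of at most `k` sets from `𝒜` to a set in `J`, such that
for every play in which ONE plays a `⊊`-increasing sequence from `𝒜` and TWO responds to
the most recent `min(n,k)` moves using `Υ`, TWO covers the union of ONE's moves. -/
def TwoWinsMG {S : Type*} (J 𝒜 : Set (Set S)) (k : ℕ) : Prop :=
  ∃ Υ : List (Set S) → Set S,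
    (∀ l : List (Set S), l ≠ [] → l.length ≤ k → (∀ A ∈ l, A ∈ 𝒜) →
        l.Chain' (· ⊂ ·) → Υ l ∈ J) ∧
    ∀ O : ℕ → Set S, (∀ n, O n ∈ 𝒜) → (∀ n, O n ⊂ O (n + 1)) →
      (⋃ n, O n) ⊆ ⋃ n, Υ (window k O n)

theorem window_getElem?_last {α : Type*} {k : ℕ} (hk : 2 ≤ k) (O : ℕ → α) (n : ℕ) :
    (window k O n)[(window k O n).length - 1]? = some (O n) := by
  have h : (window k O n).length = min (n + 1) k := by simp [window]
  rw [h, window, List.getElem?_map, List.getElem?_range (by omega)]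
  simp only [Option.map_some, Option.some.injEq]
  congr 1; omega

theorem window_getElem?_penultimate {α : Type*} {k : ℕ} (hk : 2 ≤ k) (O : ℕ → α) (n : ℕ) :
    (window k O (n + 1))[(window k O (n + 1)).length - 2]? = some (O n) := by
  have h : (window k O (n + 1)).length = min (n + 1 + 1) k := by simp [window]
  rw [h, window, List.getElem?_map, List.getElem?_range (by omega)]
  simp only [Option.map_some, Option.some.injEq]
  congr 1; omega

/-- The covering step: if the levels `N` are unbounded and each `N (n + 1)` bounds the coherence
threshold of `(O n, O (n + 1))`, the sets `D (O n) (N n)` cover every `O i`. -/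
theorem cover_of_unbounded {S : Type*} (D : Set S → ℕ → Set S) (O : ℕ → Set S) (N : ℕ → ℕ)
    (hmono : ∀ n, Monotone (D (O n))) (hU : ∀ n, O n = ⋃ q, D (O n) q)
    (hcoh : ∀ n, ∀ q ≥ N (n + 1), D (O n) q ⊆ D (O (n + 1)) q)
    (hN : ∀ b, ∃ j, b < N j) :
    (⋃ n, O n) ⊆ ⋃ n, D (O n) (N n) := by
  classical
  intro x hx
  obtain ⟨i, hi⟩ := Set.mem_iUnion.1 hx
  rw [hU i] at hi
  obtain ⟨q, hq⟩ := Set.mem_iUnion.1 hi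
  have hb := hN (max q ((Finset.range (i + 1)).sup N))
  set b := max q ((Finset.range (i + 1)).sup N) with hbdef
  have hlt := Nat.find_spec hb
  have hmin : ∀ t < Nat.find hb, N t ≤ b := fun t ht => not_lt.1 (Nat.find_min hb ht)
  generalize Nat.find hb = j at hlt hmin
  have hij : i ≤ j := by
    by_contra hcon
    have : N j ≤ (Finset.range (i + 1)).sup N :=
      Finset.le_sup (f := N) (Finset.mem_range.2 (by omega))
    omega
  have key : ∀ t, i ≤ t → t ≤ j → x ∈ D (O t) (N j) := by
    intro t hit
    induction t, hit using Nat.le_induction with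
    | base => exact fun _ => hmono i (by omega) hq
    | succ t hit ih =>
      intro htj
      refine hcoh t _ ?_ (ih (by omega))
      rcases Nat.lt_or_ge (t + 1) j with h | h
      · have := hmin _ h
        omega
      · have : t + 1 = j := by omega
        rw [this]
  exact Set.mem_iUnion.2 ⟨j, key j hij le_rfl⟩

/-- Theorem 4.1: if `𝒜 ⊆ ⟨J⟩` is a family in which every member has a proper superset,
the partition relation `(𝒜,⊂) → (ω-path)ᵏ_{ω/<ω}` fails for some `k ≥ 2`, and `𝒜` has a
coherent decomposition, then TWO has a winning `k`-tactic in `MG(𝒜,J)`. -/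
theorem stmt11 {S : Type u} (J : Set (Set S)) (hJ : IsFreeIdeal J)
    (𝒜 : Set (Set S)) (h𝒜 : 𝒜 ⊆ sigmaCompletion J)
    (h1 : ∀ X ∈ 𝒜, ∃ Y ∈ 𝒜, X ⊂ Y)
    (k : ℕ) (hk : 2 ≤ k)
    (h2 : ¬ OmegaPath (↥𝒜) k ℕ)
    (h3 : HasCoherentDecomposition J 𝒜) :
    TwoWinsMG J 𝒜 k := by
  classical
  obtain ⟨D, hDJ, hDm, hDU, hDc⟩ := h3
  have hm : ∀ A B : Set S, ∃ m : ℕ, A ∈ 𝒜 → B ∈ 𝒜 → A ⊂ B → ∀ n ≥ m, D A n ⊆ D B n := by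
    intro A B
    by_cases h : A ∈ 𝒜 ∧ B ∈ 𝒜 ∧ A ⊂ B
    · obtain ⟨m, hm⟩ := hDc A h.1 B h.2.1 h.2.2
      exact ⟨m, fun _ _ _ => hm⟩
    · exact ⟨0, fun a b c => absurd ⟨a, b, c⟩ h⟩
  choose m hm using hm
  simp only [OmegaPath, not_forall, not_exists, not_and] at h2
  obtain ⟨F, hF⟩ := h2
  let N : List (Set S) → ℕ := fun l =>
    max (F (l.toFinset.subtype (· ∈ 𝒜)))
      (m (l[l.length - 2]?.getD ∅) (l[l.length - 1]?.getD ∅))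
  refine ⟨fun l => D (l[l.length - 1]?.getD ∅) (N l), ?_, ?_⟩
  · intro l hl _ hlA _
    have hpos : l.length - 1 < l.length := by
      have := List.length_pos_of_ne_nil hl
      omega
    refine hDJ _ (hlA _ ?_) _
    rw [List.getElem?_eq_getElem hpos]
    exact List.getElem_mem hpos
  · intro O hO hOlt
    have hlast : ∀ n, (window k O n)[(window k O n).length - 1]?.getD ∅ = O n := fun n => by
      rw [window_getElem?_last hk]; rfl
    simp only [hlast]
    refine cover_of_unbounded D O (fun n => N (window k O n))
      (fun n => monotone_nat_of_le_succ (hDm _ (hO n))) (fun n => hDU _ (hO n)) ?_ ?_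
    · intro n q hq
      refine hm _ _ (hO n) (hO (n + 1)) (hOlt n) q (le_trans ?_ hq)
      simp only [N, hlast, window_getElem?_penultimate hk, Option.getD_some]
      exact le_max_right _ _
    · intro b
      by_contra! hcon
      refine hF (fun n => ⟨O n, hO n⟩) (strictMono_nat_of_lt_succ fun n => hOlt n)
        ((Set.finite_Iic b).subset ?_)
      rintro _ ⟨j, rfl⟩
      -- The segment starting at index `j + 1` is the window of inning `j + k`.
      refine le_trans (le_of_eq ?_) (le_trans (le_max_left _ _) (hcon (j + k)))
      refine congrArg F ?_
      have hmin : min (j + k + 1) k = k := by omega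
      have hstart : j + k + 1 - k = j + 1 := by omega
      ext ⟨A, hA⟩
      simp [window, hmin, hstart]
end

section
/- There is a cofinal family 𝒜 ⊆ ⟨J_ℝ⟩ (i.e., every meager set of reals is contained in a member of 𝒜) such that TWO has a winning 2-tactic in the game MG(𝒜, J_ℝ). -/
/-!
For a digit sequence `x` and a partition of a
final segment of `ℕ` into consecutive intervals `Iₖ = [s k, s (k+1))`, let `A(x,s)` be the set of
reals whose ternary expansion differs from `x` somewhere on `Iₖ`, for all but finitely many `k`.
It is the increasing union of the nowhere dense sets `P_m(x,s)`, where the expansion is required to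
differ from `x` on every `Iₖ` with `m ≤ s k`.  The sets `A(x,s)` are cofinal among the meager sets
(`exists_code_of_isMeagre`), and they form the family `𝒜`.

Inclusion is combinatorial (`Code.eventually_block`): if `A(x,s) ⊆ A(x',s')`, then almost every
interval of `s'` contains an interval of `s` on which `x` and `x'` agree.  Two consequences follow.

* The pieces cohere: `P_m(x,s) ⊆ P_m(x',s')` for all large `m` (`Code.eventually_piece_subset`).
* If the inclusion is proper, then infinitely often an interval of `s` is skipped, so that
  `s (n+1) ≤ s' n` for all large `n`; hence the rank `ρ_m`, the least `k` with `m ≤ s k`, strictly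
  drops from `s` to `s'` for all large `m` (`Code.eventually_rank_lt`).

Let `K(A,B)` be a bound past which both facts hold for `A ⊊ B`.  TWO answers `(A,B)` with
`P_{K(A,B)}(B)`.  Given `y ∈ P_m(O_j)`, some `n ≥ j` has `K(O_n,O_{n+1}) ≥ m`, since otherwise the
natural numbers `ρ_m(O_i)`, `i ≥ j`, would strictly decrease forever.  For the least such `n`,
coherence carries `y` from `P_K(O_j)` up to `P_K(O_{n+1})` with `K = K(O_n,O_{n+1})`, which is TWO's
answer.
-/

open Cardinal

universe u v

/-! ### Ternary digits -/

/-- The `i`-th ternary digit of `y` after the point; it depends only on `y` modulo `1`. -/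
noncomputable def dig (y : ℝ) (i : ℕ) : ℤ := ⌊(3 : ℝ) ^ (i + 1) * y⌋ - 3 * ⌊(3 : ℝ) ^ i * y⌋

lemma dig_bounds (y : ℝ) (i : ℕ) : 0 ≤ dig y i ∧ dig y i < 3 := by
  unfold dig
  have e : (3 : ℝ) ^ (i + 1) * y = 3 * ((3 : ℝ) ^ i * y) := by ring
  rw [e]
  set z := (3 : ℝ) ^ i * y
  have h1 : 3 * ⌊z⌋ ≤ ⌊3 * z⌋ := by
    rw [Int.le_floor]; push_cast; linarith [Int.floor_le z]
  have h2 : ⌊3 * z⌋ < 3 * ⌊z⌋ + 3 := by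
    rw [Int.floor_lt]; push_cast; linarith [Int.lt_floor_add_one z]
  omega

lemma dig_sub_int (y : ℝ) (k : ℤ) (i : ℕ) : dig (y - k) i = dig y i := by
  unfold dig
  have h : ∀ j : ℕ, ⌊(3 : ℝ) ^ j * (y - k)⌋ = ⌊(3 : ℝ) ^ j * y⌋ - 3 ^ j * k := by
    intro j
    rw [← Int.floor_sub_intCast]
    congr 1
    push_cast
    ring
  rw [h, h]
  ring

lemma floor_succ (y : ℝ) (i : ℕ) :
    ⌊(3 : ℝ) ^ (i + 1) * y⌋ = 3 * ⌊(3 : ℝ) ^ i * y⌋ + dig y i := by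
  unfold dig; ring

/-- A triadic interval can be shrunk to one on which the digits from `q` to `r` are prescribed. -/
lemma exists_cyl_digits (w : ℕ → ℤ) (hw : ∀ i, 0 ≤ w i ∧ w i < 3) (p : ℤ) (q r : ℕ)
    (hqr : q ≤ r) : ∃ p' : ℤ, ∀ y : ℝ, ⌊(3 : ℝ) ^ r * y⌋ = p' →
      ⌊(3 : ℝ) ^ q * y⌋ = p ∧ ∀ i, q ≤ i → i < r → dig y i = w i := by
  induction r, hqr using Nat.le_induction with
  | base => exact ⟨p, fun y hy => ⟨hy, fun i h1 h2 => by omega⟩⟩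
  | succ r hr ih =>
    obtain ⟨p', hp'⟩ := ih
    refine ⟨3 * p' + w r, fun y hy => ?_⟩
    have h1 := floor_succ y r
    have h2 := dig_bounds y r
    have h3 := hw r
    have h4 : ⌊(3 : ℝ) ^ r * y⌋ = p' := by omega
    refine ⟨(hp' y h4).1, fun i hi1 hi2 => ?_⟩
    rcases Nat.lt_succ_iff_lt_or_eq.1 hi2 with h | rfl
    · exact (hp' y h4).2 i hi1 h
    · omega

lemma floor_eq_of_digits (y z : ℝ) (q r : ℕ) (hqr : q ≤ r)
    (h0 : ⌊(3 : ℝ) ^ q * y⌋ = ⌊(3 : ℝ) ^ q * z⌋)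
    (h : ∀ i, q ≤ i → i < r → dig y i = dig z i) :
    ⌊(3 : ℝ) ^ r * y⌋ = ⌊(3 : ℝ) ^ r * z⌋ := by
  induction r, hqr using Nat.le_induction with
  | base => exact h0
  | succ r hr ih =>
    rw [floor_succ, floor_succ, ih (fun i h1 h2 => h i h1 (by omega)), h r hr (by omega)]

lemma exists_cyl_subset {U : Set ℝ} (hU : IsOpen U) (hne : U.Nonempty) (q : ℕ) :
    ∃ r, q ≤ r ∧ ∃ p : ℤ, ∀ y : ℝ, ⌊(3 : ℝ) ^ r * y⌋ = p → y ∈ U := by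
  obtain ⟨u, hu⟩ := hne
  obtain ⟨ε, hε, hb⟩ := Metric.isOpen_iff.1 hU u hu
  obtain ⟨N, hN⟩ := pow_unbounded_of_one_lt (1 / ε) (by norm_num : (1 : ℝ) < 3)
  refine ⟨max q N, le_max_left _ _, ⌊(3 : ℝ) ^ (max q N) * u⌋, fun y hy => hb ?_⟩
  have h1 : (3 : ℝ) ^ N ≤ 3 ^ (max q N) := pow_le_pow_right₀ (by norm_num) (le_max_right _ _)
  set t := (3 : ℝ) ^ (max q N)
  have ht : 0 < t := by positivity
  have h2 := Int.abs_sub_lt_one_of_floor_eq_floor hy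
  rw [← mul_sub, abs_mul, abs_of_pos ht] at h2
  rw [Metric.mem_ball, Real.dist_eq]
  have h3 : 1 < t * ε := by
    rw [div_lt_iff₀ hε] at hN
    nlinarith
  exact lt_of_mul_lt_mul_left (h2.trans h3) ht.le

/-- Each triadic interval contains a nonempty open set. -/
lemma exists_open_subset_cyl (p : ℤ) (r : ℕ) :
    ∃ V : Set ℝ, IsOpen V ∧ V.Nonempty ∧ ∀ y ∈ V, ⌊(3 : ℝ) ^ r * y⌋ = p := by
  have ht : (0 : ℝ) < 3 ^ r := by positivity
  refine ⟨{y | (p : ℝ) < 3 ^ r * y ∧ 3 ^ r * y < p + 1}, ?_, ⟨(p + 1 / 2) / 3 ^ r, ?_⟩, ?_⟩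
  · have hcont : Continuous fun y : ℝ => 3 ^ r * y := by fun_prop
    exact (isOpen_lt continuous_const hcont).inter (isOpen_lt hcont continuous_const)
  · have : (3 : ℝ) ^ r * ((p + 1 / 2) / 3 ^ r) = p + 1 / 2 := by field_simp
    simp only [Set.mem_ofPred_eq, this]
    constructor <;> linarith
  · rintro y ⟨h1, h2⟩
    exact Int.floor_eq_iff.2 ⟨h1.le, h2⟩

/-- Every digit sequence that is not eventually `2` is the expansion of a real. -/
lemma exists_real_digits (c : ℕ → ℤ) (hc : ∀ i, 0 ≤ c i ∧ c i < 3)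
    (hc2 : ∀ M, ∃ i, M ≤ i ∧ c i < 2) : ∃ y : ℝ, ∀ i, dig y i = c i := by
  obtain ⟨p, hp⟩ : ∃ p : ℕ → ℤ, ∀ n, p (n + 1) = 3 * p n + c n :=
    ⟨fun n => Nat.rec 0 (fun n a => 3 * a + c n) n, fun n => rfl⟩
  let a : ℕ → ℝ := fun n => (p n : ℝ) / 3 ^ n
  let b : ℕ → ℝ := fun n => ((p n : ℝ) + 1) / 3 ^ n
  have hpR : ∀ n, (p (n + 1) : ℝ) = 3 * p n + c n := fun n => by rw [hp]; push_cast; ring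
  have ha : Monotone a := by
    refine monotone_nat_of_le_succ fun n => ?_
    have h0 : (0 : ℝ) ≤ c n := by exact_mod_cast (hc n).1
    simp only [a]
    rw [div_le_div_iff₀ (by positivity) (by positivity), hpR, pow_succ]
    have : (0 : ℝ) < 3 ^ n := by positivity
    nlinarith
  have hb : Antitone b := by
    refine antitone_nat_of_succ_le fun n => ?_
    have h0 : (c n : ℝ) ≤ 2 := by exact_mod_cast (by have := (hc n).2; omega : c n ≤ 2)
    simp only [b]
    rw [div_le_div_iff₀ (by positivity) (by positivity), hpR, pow_succ]
    have : (0 : ℝ) < 3 ^ n := by positivity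
    nlinarith
  have hb2 : ∀ n, c n < 2 → b (n + 1) < b n := by
    intro n hn
    have h0 : (c n : ℝ) ≤ 1 := by exact_mod_cast (by omega : c n ≤ 1)
    simp only [b]
    rw [div_lt_div_iff₀ (by positivity) (by positivity), hpR, pow_succ]
    have : (0 : ℝ) < 3 ^ n := by positivity
    nlinarith
  have hab : ∀ n m, a n ≤ b m := by
    intro n m
    calc a n ≤ a (max n m) := ha (le_max_left _ _)
      _ ≤ b (max n m) := by
        simp only [a, b]
        gcongr
        linarith
      _ ≤ b m := hb (le_max_right _ _)
  have hbdd : BddAbove (Set.range a) := ⟨b 0, by rintro _ ⟨n, rfl⟩; exact hab n 0⟩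
  have hfl : ∀ n, ⌊(3 : ℝ) ^ n * (⨆ n, a n)⌋ = p n := by
    intro n
    have ht : (0 : ℝ) < 3 ^ n := by positivity
    have h1 : a n ≤ ⨆ n, a n := le_ciSup hbdd n
    have h2 : (⨆ n, a n) < b n := by
      obtain ⟨i, hi, hci⟩ := hc2 n
      exact ((ciSup_le fun m => hab m (i + 1)).trans_lt (hb2 i hci)).trans_le (hb hi)
    simp only [a] at h1
    simp only [b] at h2
    rw [div_le_iff₀ ht] at h1
    rw [lt_div_iff₀ ht] at h2
    exact Int.floor_eq_iff.2 ⟨by linarith, by linarith⟩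
  refine ⟨⨆ n, a n, fun i => ?_⟩
  unfold dig
  rw [hfl, hfl, hp]
  ring

/-! ### Coded meager sets -/

/-- A digit sequence `x` together with the end points `s` of consecutive intervals
`[s k, s (k+1))`. -/
structure Code where
  x : ℕ → ℤ
  s : ℕ → ℕ
  hx : ∀ i, 0 ≤ x i ∧ x i < 3
  hs : StrictMono s

namespace Code

/-- The reals whose digits differ from `x` somewhere on each interval beginning at or after `m`. -/
def piece (c : Code) (m : ℕ) : Set ℝ :=
  {y | ∀ k, m ≤ c.s k → ∃ i, c.s k ≤ i ∧ i < c.s (k + 1) ∧ dig y i ≠ c.x i}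

/-- The meager set coded by `c`. -/
def carrier (c : Code) : Set ℝ := ⋃ m, c.piece m

/-- The least index of an interval beginning at or after `m`. -/
noncomputable def rank (c : Code) (m : ℕ) : ℕ := sInf {k | m ≤ c.s k}

lemma piece_mono (c : Code) : Monotone c.piece := fun _ _ h _ hy k hk => hy k (h.trans hk)

lemma isNowhereDense_piece (c : Code) (m : ℕ) : IsNowhereDense (c.piece m) := by
  by_contra hne
  obtain ⟨q, -, p, hp⟩ := exists_cyl_subset isOpen_interior (Set.nonempty_iff_ne_empty.2 hne) 0
  let n := max m q
  have hn : n ≤ c.s n := c.hs.le_apply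
  have hn' : c.s n < c.s (n + 1) := c.hs (Nat.lt_succ_self n)
  have hm : m ≤ n := le_max_left _ _
  have hq : q ≤ n := le_max_right _ _
  obtain ⟨p', hp'⟩ := exists_cyl_digits c.x c.hx p q (c.s (n + 1)) (by omega)
  obtain ⟨V, hV, ⟨v, hv⟩, hVp⟩ := exists_open_subset_cyl p' (c.s (n + 1))
  have hvc : v ∈ closure (c.piece m) := interior_subset (hp v (hp' v (hVp v hv)).1)
  obtain ⟨y, hyV, hy⟩ := mem_closure_iff.1 hvc V hV hv
  obtain ⟨i, h1, h2, h3⟩ := hy n (by omega)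
  exact h3 ((hp' y (hVp y hyV)).2 i (by omega) h2)

lemma isMeagre_carrier (c : Code) : IsMeagre c.carrier :=
  isMeagre_iUnion fun m => (c.isNowhereDense_piece m).isMeagre

lemma interval_unique {s : ℕ → ℕ} (hs : StrictMono s) {i n m : ℕ} (h1 : s n ≤ i)
    (h2 : i < s (n + 1)) (h3 : s m ≤ i) (h4 : i < s (m + 1)) : n = m := by
  have h5 := hs.lt_iff_lt.1 (h1.trans_lt h4)
  have h6 := hs.lt_iff_lt.1 (h3.trans_lt h2)
  omega

/-- If one coded set is contained in another, almost every interval of the second contains an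
interval of the first on which the two digit sequences agree.  Otherwise copy `c'.x` on infinitely
many pairwise non-adjacent bad intervals and differ from `c.x` everywhere else: the resulting real
lies in `c.carrier` but not in `c'.carrier`. -/
lemma eventually_block (c c' : Code) (h : c.carrier ⊆ c'.carrier) :
    ∃ N, ∀ n, N ≤ n → ∃ k, c'.s n ≤ c.s k ∧ c.s (k + 1) ≤ c'.s (n + 1) ∧
      ∀ i, c.s k ≤ i → i < c.s (k + 1) → c.x i = c'.x i := by
  classical
  by_contra! hbad
  let Bad : ℕ → Prop := fun n => ∀ k, c'.s n ≤ c.s k → c.s (k + 1) ≤ c'.s (n + 1) →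
      ∃ i, c.s k ≤ i ∧ i < c.s (k + 1) ∧ c.x i ≠ c'.x i
  obtain ⟨e, he⟩ : ∃ e, ∀ N, ∃ n, N ≤ n ∧ n % 2 = e ∧ Bad n := by
    by_contra! hno
    obtain ⟨N0, h0⟩ := hno 0
    obtain ⟨N1, h1⟩ := hno 1
    obtain ⟨n, hn, hB⟩ := hbad (max N0 N1)
    rcases Nat.mod_two_eq_zero_or_one n with hm | hm
    · exact h0 n ((le_max_left _ _).trans hn) hm hB
    · exact h1 n ((le_max_right _ _).trans hn) hm hB
  let T : ℕ → Prop := fun i => ∃ n, n % 2 = e ∧ Bad n ∧ c'.s n ≤ i ∧ i < c'.s (n + 1)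
  let d : ℕ → ℤ := fun i => if T i then c'.x i else if c.x i = 0 then 1 else 0
  have hdT : ∀ i, T i → d i = c'.x i := fun i hi => if_pos hi
  have hdn : ∀ i, ¬ T i → d i ≠ c.x i ∧ 0 ≤ d i ∧ d i < 2 := by
    intro i hi
    simp only [d, if_neg hi]
    split_ifs with h0 <;> omega
  have hd : ∀ i, 0 ≤ d i ∧ d i < 3 := by
    intro i
    by_cases hi : T i
    · rw [hdT i hi]; exact c'.hx i
    · have := hdn i hi; omega
  -- Intervals of the other parity are disjoint from the copied ones.
  have hnT : ∀ n, n % 2 ≠ e → ¬ T (c'.s n) := by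
    rintro n hn ⟨m, hm, -, h1, h2⟩
    exact hn (interval_unique c'.hs le_rfl (c'.hs (Nat.lt_succ_self n)) h1 h2 ▸ hm)
  have hd2 : ∀ M, ∃ i, M ≤ i ∧ d i < 2 := by
    intro M
    obtain ⟨n, hn, hne⟩ : ∃ n, M ≤ n ∧ n % 2 ≠ e := by
      by_cases hM : M % 2 = e
      · exact ⟨M + 1, by omega, by omega⟩
      · exact ⟨M, le_rfl, hM⟩
    exact ⟨c'.s n, hn.trans c'.hs.le_apply, (hdn _ (hnT n hne)).2.2⟩
  obtain ⟨y, hy⟩ := exists_real_digits d hd hd2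
  have hyA : y ∈ c.carrier := by
    refine Set.mem_iUnion.2 ⟨0, fun k _ => ?_⟩
    by_contra! hcon
    simp only [hy] at hcon
    have hk : c.s k < c.s (k + 1) := c.hs (Nat.lt_succ_self k)
    have hall : ∀ i, c.s k ≤ i → i < c.s (k + 1) → T i := fun i h1 h2 => by
      by_contra hT
      exact (hdn i hT).1 (hcon i h1 h2)
    obtain ⟨n, hne, hB, h1, h2⟩ := hall _ le_rfl hk
    have hle : c.s (k + 1) ≤ c'.s (n + 1) := by
      by_contra! hlt
      exact hnT (n + 1) (by omega) (hall _ h2.le hlt)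
    obtain ⟨i, hi1, hi2, hi3⟩ := hB k h1 hle
    exact hi3 (by rw [← hcon i hi1 hi2, hdT i (hall i hi1 hi2)])
  obtain ⟨m, hm⟩ := Set.mem_iUnion.1 (h hyA)
  obtain ⟨n, hn, hne, hB⟩ := he m
  obtain ⟨i, h1, h2, h3⟩ := hm n (hn.trans c'.hs.le_apply)
  exact h3 (by rw [hy, hdT i ⟨n, hne, hB, h1, h2⟩])

lemma eventually_piece_subset (c c' : Code) (h : c.carrier ⊆ c'.carrier) :
    ∃ M, ∀ m, M ≤ m → c.piece m ⊆ c'.piece m := by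
  obtain ⟨N, hN⟩ := eventually_block c c' h
  refine ⟨c'.s N, fun m hm y hy n hn => ?_⟩
  obtain ⟨k, h1, h2, h3⟩ := hN n (c'.hs.le_iff_le.1 (hm.trans hn))
  obtain ⟨i, hi1, hi2, hi3⟩ := hy k (hn.trans h1)
  exact ⟨i, h1.trans hi1, hi2.trans_le h2, by rwa [← h3 i hi1 hi2]⟩

/-- For a proper inclusion the intervals of the first code found inside those of the second skip
infinitely many indices: if from some point on none is skipped, the two codes agree from there on
and the sets coincide.  Skipping pushes `c'.s` ahead of `c.s`. -/
lemma eventually_shift (c c' : Code) (h : c.carrier ⊂ c'.carrier) :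
    ∃ N, ∀ n, N ≤ n → c.s (n + 1) ≤ c'.s n := by
  obtain ⟨N, hN⟩ := eventually_block c c' h.1
  choose! k h1 h2 h3 using hN
  have hstep : ∀ n, N ≤ n → k n + 1 ≤ k (n + 1) := fun n hn =>
    c.hs.le_iff_le.1 ((h2 n hn).trans (h1 (n + 1) (by omega)))
  have hadd : ∀ n, N ≤ n → ∀ j, k n + j ≤ k (n + j) := by
    intro n hn j
    induction j with
    | zero => simp
    | succ j ih =>
      have := hstep (n + j) (by omega)
      rw [← add_assoc n j 1]
      omega
  have hjump : ∀ M, N ≤ M → ∃ n, M ≤ n ∧ k n + 2 ≤ k (n + 1) := by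
    intro M hM
    by_contra! hno
    have heq : ∀ n, M ≤ n → k (n + 1) = k n + 1 := fun n hn => by
      have := hno n hn
      have := hstep n (by omega)
      omega
    have hs : ∀ n, M ≤ n → c'.s (n + 1) = c.s (k (n + 1)) := fun n hn => by
      refine le_antisymm (h1 (n + 1) (by omega)) ?_
      rw [heq n hn]
      exact h2 n (by omega)
    have hk : ∀ j, k (M + 1 + j) = k (M + 1) + j := by
      intro j
      induction j with
      | zero => simp
      | succ j ih =>
        rw [← add_assoc (M + 1) j 1, heq _ (by omega), ih]
        omega
    refine h.2 fun y hy => ?_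
    obtain ⟨m, hm⟩ := Set.mem_iUnion.1 hy
    refine Set.mem_iUnion.2 ⟨max m (c.s (k (M + 1))), fun l hl => ?_⟩
    have hl1 : k (M + 1) ≤ l := c.hs.le_iff_le.1 ((le_max_right _ _).trans hl)
    obtain ⟨j, rfl⟩ := Nat.exists_eq_add_of_le hl1
    have e1 : c'.s (M + 1 + j) = c.s (k (M + 1) + j) := by
      rw [show M + 1 + j = M + j + 1 by omega, hs _ (by omega),
        show M + j + 1 = M + 1 + j by omega, hk]
    have e2 : c'.s (M + 1 + j + 1) = c.s (k (M + 1) + j + 1) := by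
      rw [hs _ (by omega), heq _ (by omega), hk]
    obtain ⟨i, hi1, hi2, hi3⟩ := hm (M + 1 + j) (by rw [e1]; exact (le_max_left _ _).trans hl)
    rw [e1] at hi1
    rw [e2] at hi2
    refine ⟨i, hi1, hi2, ?_⟩
    rw [h3 (M + 1 + j) (by omega) i (by rwa [hk]) (by rwa [hk])]
    exact hi3
  have hgap : ∀ C, ∃ n, N ≤ n ∧ n + C ≤ k n + N := by
    intro C
    induction C with
    | zero => exact ⟨N, le_rfl, by omega⟩
    | succ C ih =>
      obtain ⟨n, hn, hC⟩ := ih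
      obtain ⟨n', hn', hj⟩ := hjump n hn
      obtain ⟨j, rfl⟩ := Nat.exists_eq_add_of_le hn'
      have := hadd n hn j
      exact ⟨n + j + 1, by omega, by omega⟩
  obtain ⟨n₀, hn₀, hC⟩ := hgap (N + 1)
  refine ⟨n₀ + 1, fun n hn => ?_⟩
  obtain ⟨j, rfl⟩ := Nat.exists_eq_add_of_le hn
  have := hadd n₀ hn₀ j
  rw [show n₀ + 1 + j = n₀ + j + 1 by omega]
  exact (c.hs.monotone (by omega)).trans (h2 (n₀ + j) (by omega))

lemma le_s_rank (c : Code) (m : ℕ) : m ≤ c.s (c.rank m) :=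
  Nat.sInf_mem (s := {k | m ≤ c.s k}) ⟨m, c.hs.le_apply⟩

lemma eventually_rank_lt (c c' : Code) (h : c.carrier ⊂ c'.carrier) :
    ∃ M, ∀ m, M ≤ m → c'.rank m < c.rank m := by
  obtain ⟨N, hN⟩ := eventually_shift c c' h
  refine ⟨c.s N + 1, fun m hm => ?_⟩
  have h1 := c.le_s_rank m
  have h2 : N < c.rank m := c.hs.lt_iff_lt.1 (by omega)
  obtain ⟨r, hr⟩ := Nat.exists_eq_add_of_lt h2
  rw [hr] at h1 ⊢
  have h3 : c'.rank m ≤ N + r := Nat.sInf_le (h1.trans (hN (N + r) (by omega)))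
  omega

end Code

/-! ### Cofinality -/

/-- A single block of digits, placed at position `s`, that keeps all points of `[0,1)` out of a
given nowhere dense set. The finitely many triadic intervals of length `3⁻ˢ` are treated one after
another, each time prolonging the block. -/
lemma exists_block_avoiding {F : Set ℝ} (hF : IsNowhereDense F) (s : ℕ) :
    ∃ r, s < r ∧ ∃ w : ℕ → ℤ, (∀ i, 0 ≤ w i ∧ w i < 3) ∧
      ∀ y : ℝ, 0 ≤ y → y < 1 → (∀ i, s ≤ i → i < r → dig y i = w i) → y ∉ F := by
  have key : ∀ j : ℕ, ∃ r, s < r ∧ ∃ w : ℕ → ℤ, (∀ i, 0 ≤ w i ∧ w i < 3) ∧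
      ∀ y : ℝ, 0 ≤ y → ⌊(3 : ℝ) ^ s * y⌋ < j →
        (∀ i, s ≤ i → i < r → dig y i = w i) → y ∉ F := by
    intro j
    induction j with
    | zero =>
      refine ⟨s + 1, by omega, fun _ => 0, by simp, fun y hy hlt => ?_⟩
      have : 0 ≤ ⌊(3 : ℝ) ^ s * y⌋ := Int.floor_nonneg.2 (by positivity)
      push_cast at hlt
      omega
    | succ j ih =>
      obtain ⟨r, hr, w, hw, hav⟩ := ih
      obtain ⟨p, hp⟩ := exists_cyl_digits w hw j s r hr.le
      obtain ⟨V, hV, ⟨v, hv⟩, hVp⟩ := exists_open_subset_cyl p r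
      have hne : (V ∩ (closure F)ᶜ).Nonempty := by
        by_contra hemp
        have hsub : V ⊆ closure F := fun z hz => by
          by_contra hzF
          exact hemp ⟨z, hz, hzF⟩
        have := interior_maximal hsub hV hv
        rw [hF] at this
        exact this
      obtain ⟨r', hr', p', hp'⟩ :=
        exists_cyl_subset (hV.inter isClosed_closure.isOpen_compl) hne r
      obtain ⟨V', -, ⟨z, hz⟩, hV'p⟩ := exists_open_subset_cyl p' r'
      have hzp := hV'p z hz
      have hzc := hp z (hVp z (hp' z hzp).1)
      refine ⟨r', by omega, dig z, dig_bounds z, fun y hy hlt hdig => ?_⟩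
      by_cases hyj : ⌊(3 : ℝ) ^ s * y⌋ < j
      · exact hav y hy hyj fun i h1 h2 => by
          rw [hdig i h1 (by omega), hzc.2 i h1 h2]
      · have e : ⌊(3 : ℝ) ^ s * y⌋ = ⌊(3 : ℝ) ^ s * z⌋ := by
          rw [hzc.1]; push_cast at hlt; omega
        have e' := floor_eq_of_digits y z s r' (by omega) e hdig
        exact fun hyF => (hp' y (e'.trans hzp)).2 (subset_closure hyF)
  obtain ⟨r, hr, w, hw, h⟩ := key (3 ^ s)
  refine ⟨r, hr, w, hw, fun y h0 h1 => h y h0 ?_⟩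
  rw [Int.floor_lt]
  push_cast
  have : (0 : ℝ) < 3 ^ s := by positivity
  nlinarith

lemma isNowhereDense_union {F G : Set ℝ} (hF : IsNowhereDense F) (hG : IsNowhereDense G) :
    IsNowhereDense (F ∪ G) := by
  unfold IsNowhereDense at *
  rw [closure_union, interior_union_isClosed_of_interior_empty isClosed_closure hG, hF]

lemma isMeagre_exists_increasing {X : Set ℝ} (hX : IsMeagre X) :
    ∃ G : ℕ → Set ℝ, (∀ n, IsNowhereDense (G n)) ∧ Monotone G ∧ X ⊆ ⋃ n, G n := by
  obtain ⟨S, hS, hc, hsub⟩ := isMeagre_iff_countable_union_isNowhereDense.1 hX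
  obtain ⟨f, hf⟩ := (hc.insert ∅).exists_eq_range (Set.insert_nonempty _ _)
  have hfn : ∀ n, IsNowhereDense (f n) := fun n => by
    have : f n ∈ insert ∅ S := hf ▸ Set.mem_range_self n
    rcases this with h | h
    · rw [h]; exact isNowhereDense_empty
    · exact hS _ h
  refine ⟨fun n => Set.accumulate f n, fun n => ?_, Set.monotone_accumulate, fun y hy => ?_⟩
  · induction n with
    | zero => simpa using hfn 0
    | succ n ih =>
      change IsNowhereDense (Set.accumulate f (n + 1))
      rw [Set.accumulate_succ]
      exact isNowhereDense_union ih (hfn _)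
  · obtain ⟨t, ht, hyt⟩ := hsub hy
    obtain ⟨n, rfl⟩ : t ∈ Set.range f := hf ▸ Set.mem_insert_of_mem _ ht
    exact Set.mem_iUnion.2 ⟨n, Set.subset_accumulate hyt⟩

lemma exists_code_of_isMeagre {X : Set ℝ} (hX : IsMeagre X) : ∃ c : Code, X ⊆ c.carrier := by
  -- Digits ignore the integer part, so `X` is replaced by the union of its integer translates.
  have hX' : IsMeagre (⋃ k : ℤ, (fun z : ℝ => z + k) ⁻¹' X) :=
    isMeagre_iUnion fun k => hX.preimage_of_isOpenMap
      (Homeomorph.addRight (k : ℝ)).continuous (Homeomorph.addRight (k : ℝ)).isOpenMap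
  obtain ⟨G, hG, hmono, hsub⟩ := isMeagre_exists_increasing hX'
  choose R hR W hW hav using fun (n s : ℕ) => exists_block_avoiding (hG n) s
  obtain ⟨s, hs1⟩ : ∃ s : ℕ → ℕ, ∀ n, s (n + 1) = R n (s n) :=
    ⟨fun n => Nat.rec 0 R n, fun n => rfl⟩
  have hs : StrictMono s := strictMono_nat_of_lt_succ fun n => by rw [hs1]; exact hR n (s n)
  let idx : ℕ → ℕ := fun i => sInf {n | i < s (n + 1)}
  have hidx : ∀ n i, s n ≤ i → i < s (n + 1) → idx i = n := by
    intro n i h1 h2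
    have hle : idx i ≤ n := Nat.sInf_le h2
    have hmem : i < s (idx i + 1) := Nat.sInf_mem (s := {n | i < s (n + 1)}) ⟨n, h2⟩
    have h3 : s n < s (idx i + 1) := h1.trans_lt hmem
    have := hs.lt_iff_lt.1 h3
    omega
  refine ⟨⟨fun i => W (idx i) (s (idx i)) i, s, fun i => hW _ _ i, hs⟩, fun y hy => ?_⟩
  have hz : y - ⌊y⌋ ∈ ⋃ n, G n := hsub (Set.mem_iUnion.2 ⟨⌊y⌋, by simpa using hy⟩)
  obtain ⟨j, hj⟩ := Set.mem_iUnion.1 hz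
  refine Set.mem_iUnion.2 ⟨s j, fun n hn => ?_⟩
  change ∃ i, s n ≤ i ∧ i < s (n + 1) ∧ dig y i ≠ W (idx i) (s (idx i)) i
  by_contra! hcon
  refine hav n (s n) (y - ⌊y⌋) (by linarith [Int.floor_le y])
    (by linarith [Int.lt_floor_add_one y]) (fun i h1 h2 => ?_)
    (hmono (hs.le_iff_le.1 hn) hj)
  rw [dig_sub_int, hcon i h1 (by rwa [hs1])]
  rw [hidx n i h1 (by rwa [hs1])]

/-! ### The tactic -/

lemma window_two {α : Type*} (O : ℕ → α) (n : ℕ) : window 2 O (n + 1) = [O n, O (n + 1)] := by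
  have h : min (n + 1 + 1) 2 = 2 := by omega
  simp only [window, h, show n + 1 + 1 - 2 = n by omega]
  rfl

/-- Corollary 4.2: there is a cofinal family `𝒜` of meager sets of reals such that TWO
has a winning 2-tactic in `MG(𝒜, J_ℝ)`, where `J_ℝ` is the ideal of nowhere dense sets. -/
theorem stmt12 :
    ∃ 𝒜 : Set (Set ℝ),
      (∀ A ∈ 𝒜, IsMeagre A) ∧
      (∀ X : Set ℝ, IsMeagre X → ∃ A ∈ 𝒜, X ⊆ A) ∧
      TwoWinsMG {A : Set ℝ | IsNowhereDense A} 𝒜 2 := by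
  classical
  refine ⟨Set.range Code.carrier, ?_, ?_, ?_⟩
  · rintro _ ⟨c, rfl⟩
    exact c.isMeagre_carrier
  · intro X hX
    obtain ⟨c, hc⟩ := exists_code_of_isMeagre hX
    exact ⟨_, ⟨c, rfl⟩, hc⟩
  have hcode : ∀ A : Set ℝ, ∃ c : Code, A ∈ Set.range Code.carrier → c.carrier = A := by
    intro A
    by_cases hA : A ∈ Set.range Code.carrier
    · obtain ⟨c, hc⟩ := hA
      exact ⟨c, fun _ => hc⟩
    · obtain ⟨c, -⟩ := exists_code_of_isMeagre (IsMeagre.empty (X := ℝ))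
      exact ⟨c, fun h => absurd h hA⟩
  choose code hcode using hcode
  have hK : ∀ A B : Set ℝ, ∃ K, (code A).carrier ⊂ (code B).carrier → ∀ m, K ≤ m →
      (code A).piece m ⊆ (code B).piece m ∧ (code B).rank m < (code A).rank m := by
    intro A B
    by_cases h : (code A).carrier ⊂ (code B).carrier
    · obtain ⟨M₁, h₁⟩ := Code.eventually_piece_subset _ _ h.1
      obtain ⟨M₂, h₂⟩ := Code.eventually_rank_lt _ _ h
      exact ⟨max M₁ M₂, fun _ m hm => ⟨h₁ m ((le_max_left _ _).trans hm),
        h₂ m ((le_max_right _ _).trans hm)⟩⟩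
    · exact ⟨0, fun h' => absurd h' h⟩
  choose K hK using hK
  let Υ : List (Set ℝ) → Set ℝ := fun l =>
    match l with
    | [A, B] => (code B).piece (K A B)
    | _ => ∅
  refine ⟨Υ, fun l _ _ _ _ => ?_, fun O hO hlt => ?_⟩
  · show IsNowhereDense (Υ l)
    simp only [Υ]
    split
    · exact Code.isNowhereDense_piece _ _
    · exact isNowhereDense_empty
  · have hKO : ∀ n m, K (O n) (O (n + 1)) ≤ m →
        (code (O n)).piece m ⊆ (code (O (n + 1))).piece m ∧
          (code (O (n + 1))).rank m < (code (O n)).rank m := fun n =>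
      hK _ _ (by rw [hcode _ (hO n), hcode _ (hO (n + 1))]; exact hlt n)
    intro y hy
    obtain ⟨j, hj⟩ := Set.mem_iUnion.1 hy
    rw [← hcode _ (hO j)] at hj
    obtain ⟨m, hm⟩ := Set.mem_iUnion.1 hj
    have hex : ∃ i, m ≤ K (O (j + i)) (O (j + i + 1)) := by
      by_contra! hno
      have hdec : ∀ i, (code (O (j + i))).rank m + i ≤ (code (O j)).rank m := by
        intro i
        induction i with
        | zero => simp
        | succ i ih =>
          have := (hKO (j + i) m (hno i).le).2
          rw [← add_assoc j i 1]
          omega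
      have := hdec ((code (O j)).rank m + 1)
      omega
    let t := Nat.find hex
    have ht : m ≤ K (O (j + t)) (O (j + t + 1)) := Nat.find_spec hex
    set L := K (O (j + t)) (O (j + t + 1)) with hL
    have hclimb : ∀ i, i ≤ t + 1 → y ∈ (code (O (j + i))).piece L := by
      intro i
      induction i with
      | zero => exact fun _ => Code.piece_mono _ ht hm
      | succ i ih =>
        intro hi
        refine (hKO (j + i) L ?_).1 (ih (by omega))
        rcases Nat.lt_succ_iff_lt_or_eq.1 hi with h | rfl
        · exact (not_le.1 (Nat.find_min hex h)).le.trans ht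
        · exact le_rfl
    refine Set.mem_iUnion.2 ⟨j + t + 1, ?_⟩
    rw [window_two]
    exact hclimb (t + 1) le_rfl
end

section
/- Assume that cof(J_ℝ,⊂) = λ (the least cardinality of a family of nowhere dense sets cofinal in the nowhere dense subsets of ℝ) and that the partition relation (𝒫(𝔠),⊂) → (ω-path)³_{λ/<ω} holds, where 𝔠 = 2^{ℵ₀} and 𝒫(𝔠) is the power set of 𝔠 ordered by proper inclusion. Then there is no positive integer k for which TWO has a winning k-tactic in MG(J_ℝ). -/
/-!
Player TWO's answers to a play can be forced into finitely many members of a cofinal family of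
nowhere dense sets, whose union is then too small to contain a dense set played by ONE.

Fix a countable dense set `D` and an injection `c` of `ℝ × ℕ` into a Cantor set disjoint from `D`
(`exists_coding`). A set `X ⊆ ℝ` is coded by the meagre set `D ∪ c '' (X ×ˢ univ)`. The point of
the extra factor `ℕ` is that between the codes of `X ⊂ Y` there is room for explicit intermediate
sets `interp D c i X Y`, depending on `X` and `Y` only. Hence a strictly increasing sequence
`p 0 ⊂ p 1 ⊂ ⋯` of sets of reals can be refined to a play `spread D c k p` of ONE in which
consecutive codes lie `k` innings apart. Any `k` consecutive moves of this play fall within two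
adjacent gaps, so TWO's answer under a `k`-tactic is determined by three consecutive terms of `p`,
together with one of `k` offsets.

Colour a finite family of sets of reals by a member of a cofinal family (of size `lam`) of nowhere
dense sets that contains all the answers arising from triples `X ⊂ Y ⊂ Z` of the family and all
offsets `r < k`. The partition relation for triples provides a sequence `p` that uses finitely many
colours. Along the corresponding play, TWO's answers from inning `k` on are contained in a
finite union of nowhere dense sets, and the finitely many earlier answers do not change that. So
TWO fails to cover `D`, which is contained in every move of ONE.
-/

open Cardinal

universe u v

/-! ### Finite unions of nowhere dense sets -/

theorem isNowhereDense_union_s13 {X : Type*} [TopologicalSpace X] {s t : Set X}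
    (hs : IsNowhereDense s) (ht : IsNowhereDense t) : IsNowhereDense (s ∪ t) := by
  unfold IsNowhereDense at *
  rw [closure_union, interior_union_isClosed_of_interior_empty isClosed_closure ht, hs]

theorem isNowhereDense_biUnion {X ι : Type*} [TopologicalSpace X] {I : Set ι}
    (hI : I.Finite) {f : ι → Set X} (h : ∀ i ∈ I, IsNowhereDense (f i)) :
    IsNowhereDense (⋃ i ∈ I, f i) := by
  induction I, hI using Set.Finite.induction_on with
  | empty => simp [isNowhereDense_empty]
  | insert _ _ ih =>
    rw [Set.biUnion_insert]
    exact isNowhereDense_union_s13 (h _ (Set.mem_insert _ _))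
      (ih fun i hi => h i (Set.mem_insert_of_mem _ hi))

/-! ### Coding sets of reals by meagre sets -/

/-- There are a dense set `D` and an injection `c` of `ℝ × ℕ` into the complement of `D` such that
`D ∪ range c` is meagre: the range of `c` is a Cantor set, and `D` consists of the rationals
outside it. -/
theorem exists_coding : ∃ (D : Set ℝ) (c : ℝ × ℕ → ℝ), Dense D ∧ Function.Injective c ∧
    (∀ x, c x ∉ D) ∧ IsMeagre (D ∪ Set.range c) := by
  obtain ⟨f, -, hf, hinj⟩ :=
    (isClosed_univ (X := ℝ)).exists_nat_bool_injection_of_not_countable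
      Cardinal.not_countable_real
  have hemb := hf.isClosedEmbedding hinj
  have hcl : IsClosed (Set.range f) := hemb.isClosed_range
  have htd : IsTotallyDisconnected (Set.range f) :=
    hemb.isEmbedding.isTotallyDisconnected_range.mpr inferInstance
  -- A ball inside a totally disconnected set would be a connected set with two points.
  have hint : interior (Set.range f) = ∅ := by
    by_contra hne
    obtain ⟨x, hx⟩ := Set.nonempty_iff_ne_empty.mpr hne
    obtain ⟨ε, hε, hb⟩ := Metric.isOpen_iff.mp isOpen_interior x hx
    have hsub := htd _ (hb.trans interior_subset) (convex_ball x ε).isPreconnected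
    have h1 : x ∈ Metric.ball x ε := Metric.mem_ball_self hε
    have h2 : x + ε / 2 ∈ Metric.ball x ε := by
      rw [Metric.mem_ball, Real.dist_eq, add_sub_cancel_left, abs_of_pos (half_pos hε)]
      exact half_lt_self hε
    have := hsub h1 h2
    linarith
  have hcard : #(ℝ × ℕ) = #(ℕ → Bool) := by
    simp [Cardinal.mk_real]
  obtain ⟨e⟩ := Cardinal.eq.mp hcard
  refine ⟨Set.range ((↑) : ℚ → ℝ) ∩ (Set.range f)ᶜ, f ∘ e, ?_, hinj.comp e.injective, ?_, ?_⟩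
  · exact Dense.inter_of_isOpen_right (Rat.denseRange_cast (𝕜 := ℝ))
      (interior_eq_empty_iff_dense_compl.mp hint) hcl.isOpen_compl
  · rintro x ⟨-, hx⟩
    exact hx ⟨e x, rfl⟩
  · refine IsMeagre.union ?_ ?_
    · refine IsMeagre.mono Set.inter_subset_left ?_
      rw [← Set.iUnion_singleton_eq_range]
      refine isMeagre_iUnion fun q => IsNowhereDense.isMeagre ?_
      simp [IsNowhereDense]
    · refine IsNowhereDense.isMeagre (IsNowhereDense.mono (Set.range_comp_subset_range e f) ?_)
      rw [IsNowhereDense, hcl.closure_eq, hint]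

/-- The `i`-th intermediate set between the codes of `X` and `Y`: the code `D ∪ c '' (X ×ˢ univ)`
of `X`, enlarged by the points `c (y, n)` with `y ∈ Y` and `n < i`. For `i = 0` it is the code of
`X` itself. -/
def interp (D : Set ℝ) (c : ℝ × ℕ → ℝ) (i : ℕ) (X Y : Set ℝ) : Set ℝ :=
  D ∪ c '' {z | z.1 ∈ X ∨ (z.1 ∈ Y ∧ z.2 < i)}

/-- The play obtained from `p` by interpolating: the code of `p a` is move `k * a`, and the moves
`k * a + b` with `0 < b < k` are intermediate sets between the codes of `p a` and `p (a + 1)`. -/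
def spread (D : Set ℝ) (c : ℝ × ℕ → ℝ) (k : ℕ) (p : ℕ → Set ℝ) (m : ℕ) : Set ℝ :=
  interp D c (m % k) (p (m / k)) (p (m / k + 1))

theorem spread_mul_add {D : Set ℝ} {c : ℝ × ℕ → ℝ} {k : ℕ} (p : ℕ → Set ℝ) (a : ℕ) {b : ℕ}
    (hb : b < k) : spread D c k p (k * a + b) = interp D c b (p a) (p (a + 1)) := by
  have h1 : (k * a + b) / k = a := by
    rw [Nat.mul_add_div (by omega), Nat.div_eq_of_lt hb, add_zero]
  have h2 : (k * a + b) % k = b := by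
    rw [Nat.mul_add_mod, Nat.mod_eq_of_lt hb]
  rw [spread, h1, h2]

theorem spread_ssubset {D : Set ℝ} {c : ℝ × ℕ → ℝ} (hc : Function.Injective c)
    (hD : ∀ x, c x ∉ D) {k : ℕ} {p : ℕ → Set ℝ} {a b : ℕ} (hb : b < k)
    (hp : p a ⊂ p (a + 1)) :
    spread D c k p (k * a + b) ⊂ spread D c k p (k * a + b + 1) := by
  obtain ⟨hsub, x, hx, hx'⟩ := Set.ssubset_iff_exists.mp hp
  have hw : c (x, b) ∉ interp D c b (p a) (p (a + 1)) := by
    rintro (h | ⟨z, hz, h⟩)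
    · exact hD _ h
    · obtain rfl := hc h
      rcases hz with hz | hz
      · exact hx' hz
      · exact lt_irrefl _ hz.2
  rw [spread_mul_add p a hb]
  -- The next move either lies in the same gap or is the code of `p (a + 1)`.
  rcases Nat.lt_or_ge (b + 1) k with h | h
  · rw [add_assoc, spread_mul_add p a h]
    refine Set.ssubset_iff_exists.mpr
      ⟨?_, c (x, b), Or.inr ⟨_, Or.inr ⟨hx, b.lt_succ_self⟩, rfl⟩, hw⟩
    exact Set.union_subset_union_right _ (Set.image_mono fun z hz =>
      hz.imp_right fun hz => ⟨hz.1, hz.2.trans b.lt_succ_self⟩)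
  · have hkb : k * a + b + 1 = k * (a + 1) + 0 := by rw [mul_add]; omega
    rw [hkb, spread_mul_add p (a + 1) (by omega)]
    refine Set.ssubset_iff_exists.mpr ⟨?_, c (x, b), Or.inr ⟨_, Or.inl hx, rfl⟩, hw⟩
    exact Set.union_subset_union_right _ (Set.image_mono fun z hz =>
      Or.inl (hz.elim (fun h => hsub h) fun h => h.1))

theorem spread_isMeagre {D : Set ℝ} {c : ℝ × ℕ → ℝ} (h : IsMeagre (D ∪ Set.range c)) (k : ℕ)
    (p : ℕ → Set ℝ) (m : ℕ) : IsMeagre (spread D c k p m) :=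
  h.mono (Set.union_subset_union_right _ (Set.image_subset_range _ _))

/-! ### Answers determined by triples -/

/-- The triple `X, Y, Z` as a sequence, constant from its third term on. -/
def tri (X Y Z : Set ℝ) : ℕ → Set ℝ
  | 0 => X
  | 1 => Y
  | _ => Z

/-- The `k` consecutive moves, from offset `r` on, of the play that interpolates `X, Y, Z`. -/
def tripleWindow (D : Set ℝ) (c : ℝ × ℕ → ℝ) (k r : ℕ) (X Y Z : Set ℝ) : List (Set ℝ) :=
  (List.range k).map fun i => spread D c k (tri X Y Z) (r + i)

theorem tripleWindow_chain {D : Set ℝ} {c : ℝ × ℕ → ℝ} (hc : Function.Injective c)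
    (hD : ∀ x, c x ∉ D) {k r : ℕ} (hr : r < k) {X Y Z : Set ℝ} (hXY : X ⊂ Y) (hYZ : Y ⊂ Z) :
    (tripleWindow D c k r X Y Z).IsChain (· ⊂ ·) := by
  rw [tripleWindow, List.isChain_iff_getElem]
  intro i hi
  simp only [List.length_map, List.length_range] at hi
  simp only [List.getElem_map, List.getElem_range]
  rcases Nat.lt_or_ge (r + i) k with h | h
  · simpa [add_assoc] using spread_ssubset hc hD (p := tri X Y Z) (a := 0) h hXY
  · have := spread_ssubset hc hD (p := tri X Y Z) (a := 1) (b := r + i - k) (k := k)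
      (by omega) hYZ
    rwa [mul_one, Nat.add_sub_cancel' h] at this

/-- A window of length `k` that starts in the gap between `p a` and `p (a + 1)` depends on `p a`,
`p (a + 1)` and `p (a + 2)` only. -/
theorem window_spread {D : Set ℝ} {c : ℝ × ℕ → ℝ} {k : ℕ} (p : ℕ → Set ℝ) (a : ℕ) {r n : ℕ}
    (hr : r < k) (hn : n + 1 = k * a + r + k) :
    window k (spread D c k p) n = tripleWindow D c k r (p a) (p (a + 1)) (p (a + 2)) := by
  have hmin : min (n + 1) k = k := by omega
  have hsub : n + 1 - k = k * a + r := by omega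
  rw [window, tripleWindow, hmin, hsub]
  refine List.map_congr_left fun i hi => ?_
  have hi := List.mem_range.mp hi
  rcases Nat.lt_or_ge (r + i) k with h | h
  · have h0 := spread_mul_add (D := D) (c := c) (tri (p a) (p (a + 1)) (p (a + 2))) 0 h
    rw [mul_zero, zero_add] at h0
    rw [add_assoc, spread_mul_add p a h, h0]
    rfl
  · have hlt : r + i - k < k := by omega
    have h0 := spread_mul_add (D := D) (c := c) (tri (p a) (p (a + 1)) (p (a + 2))) 1 hlt
    rw [mul_one, Nat.add_sub_cancel' h] at h0
    have h1 : k * a + r + i = k * (a + 1) + (r + i - k) := by rw [mul_add]; omega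
    rw [h1, spread_mul_add p (a + 1) hlt, h0]
    rfl

/-- A cofinal family of minimal size, indexed by the set of colours. -/
theorem exists_cofinal_family {lam : Cardinal.{0}}
    (hcof : cofP (↥{A : Set ℝ | IsNowhereDense A}) = lam) :
    ∃ g : Quotient.out lam → Set ℝ, (∀ l, IsNowhereDense (g l)) ∧
      ∀ A, IsNowhereDense A → ∃ l, A ⊆ g l := by
  have hmem := csInf_mem (s := { κ : Cardinal.{0} | ∃ s : Set ↥{A : Set ℝ | IsNowhereDense A},
    #↥s = κ ∧ ∀ x, ∃ y ∈ s, x ≤ y }) ⟨_, Set.univ, rfl, fun x => ⟨x, trivial, le_rfl⟩⟩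
  obtain ⟨s, hs, hcofinal⟩ := hmem
  have hs' : #↥s = #(Quotient.out lam) := by rw [Cardinal.mk_out, ← hcof]; exact hs
  obtain ⟨e⟩ := Cardinal.eq.mp hs'
  refine ⟨fun l => (e.symm l).1.1, fun l => (e.symm l).1.2, fun A hA => ?_⟩
  obtain ⟨y, hy, hAy⟩ := hcofinal ⟨A, hA⟩
  refine ⟨e ⟨y, hy⟩, ?_⟩
  simp only [Equiv.symm_apply_apply]
  exact hAy

/-- Theorem 4.6: if the cofinality of the ideal of nowhere dense subsets of `ℝ` is `lam`
and the partition relation `(𝒫(𝔠),⊂) → (ω-path)³_{lam/<ω}` holds (here `𝒫(𝔠)` is realized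
as the power set of `ℝ`, a set of cardinality `𝔠`, ordered by inclusion), then for no
positive integer `k` does TWO have a winning `k`-tactic in `MG(J_ℝ)` (the monotonic game
in which ONE plays arbitrary meager sets). -/
theorem stmt13 (lam : Cardinal.{0})
    (hcof : cofP (↥{A : Set ℝ | IsNowhereDense A}) = lam)
    (hpart : OmegaPath (Set ℝ) 3 (Quotient.out lam)) :
    ∀ k : ℕ, 1 ≤ k →
      ¬ TwoWinsMG {A : Set ℝ | IsNowhereDense A} {A : Set ℝ | IsMeagre A} k := by
  rintro k hk ⟨Υ, hΥ, hwin⟩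
  obtain ⟨D, c, hdense, hc, hD, hmeagre⟩ := exists_coding
  obtain ⟨g, hg, hgcof⟩ := exists_cofinal_family hcof
  -- All triples and offsets are taken into account at once, so that the three elements of a
  -- three-element family need not be told apart.
  have hcolour : ∀ s : Finset (Set ℝ), ∃ l, ∀ X ∈ s, ∀ Y ∈ s, ∀ Z ∈ s, X ⊂ Y → Y ⊂ Z →
      ∀ r < k, Υ (tripleWindow D c k r X Y Z) ⊆ g l := by
    intro s
    let I : Set (Set ℝ × Set ℝ × Set ℝ × ℕ) :=
      {t | t ∈ (s : Set (Set ℝ)) ×ˢ (s : Set (Set ℝ)) ×ˢ (s : Set (Set ℝ)) ×ˢ Set.Iio k ∧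
        t.1 ⊂ t.2.1 ∧ t.2.1 ⊂ t.2.2.1}
    have hI : I.Finite := Set.Finite.subset (s.finite_toSet.prod (s.finite_toSet.prod
      (s.finite_toSet.prod (Set.finite_Iio k)))) fun t ht => ht.1
    obtain ⟨l, hl⟩ := hgcof _ (isNowhereDense_biUnion hI
      (f := fun t => Υ (tripleWindow D c k t.2.2.2 t.1 t.2.1 t.2.2.1)) (by
        rintro ⟨X, Y, Z, r⟩ ⟨⟨-, -, -, hr⟩, hXY, hYZ⟩
        refine hΥ _ ?_ ?_ ?_ (tripleWindow_chain hc hD hr hXY hYZ)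
        · apply List.ne_nil_of_length_pos
          simp only [tripleWindow, List.length_map, List.length_range]
          omega
        · simp [tripleWindow]
        · intro A hA
          obtain ⟨i, -, rfl⟩ := List.mem_map.mp hA
          exact spread_isMeagre hmeagre _ _ _))
    refine ⟨l, fun X hX Y hY Z hZ hXY hYZ r hr => ?_⟩
    exact (Set.subset_biUnion_of_mem
      (u := fun t : Set ℝ × Set ℝ × Set ℝ × ℕ =>
        Υ (tripleWindow D c k t.2.2.2 t.1 t.2.1 t.2.2.1))
      (show (X, Y, Z, r) ∈ I from ⟨⟨hX, hY, hZ, hr⟩, hXY, hYZ⟩)).trans hl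
  choose F hF using hcolour
  obtain ⟨p, hp, hfin⟩ := hpart F
  -- The partition relation ignores the term `p 0`.
  let q : ℕ → Set ℝ := fun j => p (j + 1)
  have hq : ∀ j, q j ⊂ q (j + 1) := fun j => hp (Nat.lt_succ_self _)
  let O : ℕ → Set ℝ := spread D c k q
  have hO : ∀ n, O n ⊂ O (n + 1) := by
    intro n
    have := spread_ssubset hc hD (p := q) (Nat.mod_lt n hk) (hq (n / k))
    rwa [Nat.div_add_mod] at this
  have hOm : ∀ n, O n ∈ {A : Set ℝ | IsMeagre A} := spread_isMeagre hmeagre k q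
  have hcover := hwin O hOm hO
  have hearly : IsNowhereDense (⋃ n ∈ Set.Iio k, Υ (window k O n)) := by
    refine isNowhereDense_biUnion (Set.finite_Iio k) fun n _ => hΥ _ ?_ ?_ ?_ ?_
    · apply List.ne_nil_of_length_pos
      simp only [window, List.length_map, List.length_range]
      omega
    · simp [window]
    · intro A hA
      obtain ⟨i, -, rfl⟩ := List.mem_map.mp hA
      exact hOm _
    · change List.IsChain _ _
      rw [window, List.isChain_iff_getElem]
      intro i _
      simp only [List.getElem_map, List.getElem_range]
      exact hO _
  have hlate := isNowhereDense_biUnion hfin (f := g) fun l _ => hg l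
  have hnd := isNowhereDense_union_s13 hearly hlate
  have hDnd : IsNowhereDense D := by
    refine hnd.mono ?_
    refine (Set.subset_union_left.trans (Set.subset_iUnion O 0)).trans (hcover.trans ?_)
    refine Set.iUnion_subset fun n => ?_
    rcases Nat.lt_or_ge n k with h | h
    · exact (Set.subset_biUnion_of_mem (u := fun n => Υ (window k O n))
        (Set.mem_Iio.mpr h)).trans
        Set.subset_union_left
    · refine Set.Subset.trans ?_ Set.subset_union_right
      have hr := Nat.mod_lt (n + 1 - k) hk
      have hdiv := Nat.div_add_mod (n + 1 - k) k
      rw [window_spread q ((n + 1 - k) / k) hr (by omega)]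
      refine Set.Subset.trans ?_ (Set.subset_biUnion_of_mem (u := g)
        (Set.mem_range_self ((n + 1 - k) / k)))
      refine hF _ _ ?_ _ ?_ _ ?_ (hq _) (hq _) _ hr
      · exact Finset.mem_image.mpr ⟨0, by simp, rfl⟩
      · exact Finset.mem_image.mpr ⟨1, by simp, rfl⟩
      · exact Finset.mem_image.mpr ⟨2, by simp, rfl⟩
  rw [IsNowhereDense, hdense.closure_eq, interior_univ] at hDnd
  exact Set.univ_nonempty.ne_empty hDnd
end
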